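/- arXiv:1510.08118 — 13 statements merged into one kernel-verified Lean document; each statement's English description precedes it below -/
import Mathlib

section
/- Let α, β > 0 be real numbers, let l, m ≥ 1 be natural numbers, and let A, B : ℝ → ℕ be weighted sets whose supports are closed, discrete subsets of ℝ that are bounded below. If for every x ∈ ℝ one has l·A(x/α) + m·A(x/β) = l·B(x/α) + m·B(x/β), then A = B. -/
theorem finite_inter_of_closed_discrete (S : Set ℝ) (hc : IsClosed S) (hd : DiscreteTopology S)
    (r : ℝ) : (S ∩ Set.Icc (-r) r).Finite := by
  have hk : IsCompact (S ∩ Set.Icc (-r) r) := isCompact_Icc.inter_left hc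
  exact hk.finite (IsDiscrete.mono ⟨hd⟩ Set.inter_subset_left)

theorem scaling_absurd (S : Set ℝ) (hf : ∀ r : ℝ, (S ∩ Set.Icc (-r) r).Finite) (q : ℝ)
    (hq0 : 0 < q) (hq1 : q < 1) (hS : ∀ y ∈ S, q * y ∈ S) (x : ℝ) (hx : x ≠ 0) : x ∉ S := by
  intro hxS
  have hmem : ∀ n : ℕ, q ^ n * x ∈ S := by
    intro n
    induction n with
    | zero => simpa using hxS
    | succ k ih =>
      have := hS _ ih
      rwa [← mul_assoc, ← pow_succ'] at this
  have hinj : Function.Injective (fun n : ℕ => q ^ n * x) := by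
    intro a b hab
    have h1 : q ^ a = q ^ b := mul_right_cancel₀ hx hab
    exact (pow_right_strictAnti₀ hq0 hq1).injective h1
  refine Set.infinite_of_injective_forall_mem hinj (s := S ∩ Set.Icc (-|x|) |x|) ?_ (hf |x|)
  intro n
  refine ⟨hmem n, abs_le.mp ?_⟩
  rw [abs_mul, abs_of_pos (pow_pos hq0 n)]
  exact mul_le_of_le_one_left (abs_nonneg x) (pow_le_one₀ hq0.le hq1.le)

/-- Lemma 3.14: a weighted set `A` (discrete, bounded below) can be reconstructed from
the weighted union of `l` copies of `αA` and `m` copies of `βA`. -/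
theorem stmt_0 (α β : ℝ) (hα : 0 < α) (hβ : 0 < β) (l m : ℕ) (hl : 1 ≤ l) (hm : 1 ≤ m)
    (A B : ℝ → ℕ)
    (hAclosed : IsClosed {x : ℝ | A x ≠ 0}) (hAdisc : DiscreteTopology {x : ℝ | A x ≠ 0})
    (hAbdd : BddBelow {x : ℝ | A x ≠ 0})
    (hBclosed : IsClosed {x : ℝ | B x ≠ 0}) (hBdisc : DiscreteTopology {x : ℝ | B x ≠ 0})
    (hBbdd : BddBelow {x : ℝ | B x ≠ 0})
    (h : ∀ x : ℝ, l * A (x / α) + m * A (x / β) = l * B (x / α) + m * B (x / β)) :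
    A = B := by
  have key : ∀ x : ℝ, A (x / α) = B (x / α) ↔ A (x / β) = B (x / β) := by
    intro x
    have hx := h x
    constructor
    · intro e
      rw [e] at hx
      exact Nat.eq_of_mul_eq_mul_left hm (Nat.add_left_cancel hx)
    · intro e
      rw [e] at hx
      exact Nat.eq_of_mul_eq_mul_left hl (Nat.add_right_cancel hx)
  have same : ∀ y : ℝ, l * A y + m * A y = l * B y + m * B y → A y = B y := by
    intro y hy
    rw [← add_mul, ← add_mul] at hy
    exact Nat.eq_of_mul_eq_mul_left (by omega) hy
  have hf : ∀ r : ℝ, ({x : ℝ | A x ≠ B x} ∩ Set.Icc (-r) r).Finite := by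
    intro r
    refine ((finite_inter_of_closed_discrete _ hAclosed hAdisc r).union
      (finite_inter_of_closed_discrete _ hBclosed hBdisc r)).subset ?_
    rintro x ⟨hx, hr⟩
    by_cases hA : A x = 0
    · right
      refine ⟨fun hB => hx (hA.trans hB.symm), hr⟩
    · exact Or.inl ⟨hA, hr⟩
  funext x
  by_cases hx : x = 0
  · subst hx
    exact same 0 (by simpa using h 0)
  by_contra hne
  rcases lt_trichotomy α β with hlt | heq | hgt
  · refine scaling_absurd _ hf (α / β) (by positivity) ((div_lt_one hβ).2 hlt) ?_ x hx hne
    intro y hy hc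
    apply hy
    have hk := (key (α * y)).2 (by rwa [mul_div_right_comm])
    rwa [mul_div_cancel_left₀ _ hα.ne'] at hk
  · subst heq
    have := h (α * x)
    rw [mul_div_cancel_left₀ _ hα.ne'] at this
    exact hne (same x this)
  · refine scaling_absurd _ hf (β / α) (by positivity) ((div_lt_one hα).2 hgt) ?_ x hx hne
    intro y hy hc
    apply hy
    have hk := (key (β * y)).1 (by rwa [mul_div_right_comm])
    rwa [mul_div_cancel_left₀ _ hβ.ne'] at hk
end

section
/- Let n, p be natural numbers with 1 ≤ p ≤ n. For all natural numbers k, l one has (k+p)·(k+n−p−1) = (l+p)·(l+n−p+1) (as integers, allowing k+n−p−1 to be negative when p = n and k = 0) if and only if k = l + 1 and n = 2p. -/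
/-- Lemma 4.8 (iii): `(k+p)(k+n-p-1) = (l+p)(l+n-p+1)` iff `k = l+1` and `n = 2p`. -/
theorem stmt_3 (n p : ℕ) (hp : 1 ≤ p) (hpn : p ≤ n) (k l : ℕ) :
    ((k : ℤ) + p) * ((k : ℤ) + n - p - 1) = ((l : ℤ) + p) * ((l : ℤ) + n - p + 1) ↔
      k = l + 1 ∧ n = 2 * p := by
  constructor
  · intro h
    rcases lt_trichotomy k (l + 1) with hk | hk | hk
    · exfalso
      have h1 : ((k : ℤ) + p) * ((k : ℤ) + n - p - 1) < ((k : ℤ) + p) * ((l : ℤ) + n - p + 1) :=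
        mul_lt_mul_of_pos_left (by omega) (by omega)
      have h2 : ((k : ℤ) + p) * ((l : ℤ) + n - p + 1) ≤ ((l : ℤ) + p) * ((l : ℤ) + n - p + 1) :=
        mul_le_mul_of_nonneg_right (by omega) (by omega)
      omega
    · refine ⟨hk, ?_⟩
      subst hk
      push_cast at h
      have : (n : ℤ) = 2 * p := by linarith
      omega
    · exfalso
      have h1 : ((l : ℤ) + p) * ((l : ℤ) + n - p + 1) < ((k : ℤ) + p) * ((l : ℤ) + n - p + 1) :=
        mul_lt_mul_of_pos_right (by omega) (by omega)
      have h2 : ((k : ℤ) + p) * ((l : ℤ) + n - p + 1) ≤ ((k : ℤ) + p) * ((k : ℤ) + n - p - 1) :=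
        mul_le_mul_of_nonneg_left (by omega) (by omega)
      omega
  · rintro ⟨rfl, rfl⟩
    push_cast
    ring
end

section
/- Let a, b ≥ 1 be natural numbers with a ≠ b, and let A : ℝ → ℕ be a weighted set whose support is a closed, discrete subset of [0,∞) containing at least one positive element. If γ, δ, γ', δ' > 0 are reals such that for every x ∈ ℝ one has a·A(x/γ) + b·A(x/δ) = a·A(x/γ') + b·A(x/δ'), then γ = γ' and δ = δ'. -/
lemma exists_min_pos (A : ℝ → ℕ)
    (hclosed : IsClosed {x : ℝ | A x ≠ 0}) (hdisc : DiscreteTopology {x : ℝ | A x ≠ 0})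
    (hpos : ∃ x : ℝ, A x ≠ 0 ∧ 0 < x) :
    ∃ m : ℝ, 0 < m ∧ A m ≠ 0 ∧ ∀ y, 0 < y → A y ≠ 0 → m ≤ y := by
  obtain ⟨x0, hx0, hx0p⟩ := hpos
  have hfin : ({x : ℝ | A x ≠ 0} ∩ Set.Icc 0 x0).Finite := by
    have hc : IsCompact ({x : ℝ | A x ≠ 0} ∩ Set.Icc 0 x0) := isCompact_Icc.inter_left hclosed
    have hd : DiscreteTopology ↑({x : ℝ | A x ≠ 0} ∩ Set.Icc 0 x0) :=
      DiscreteTopology.of_subset hdisc Set.inter_subset_left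
    exact hc.finite ⟨hd⟩
  have hfin2 : ({x : ℝ | A x ≠ 0} ∩ Set.Ioc 0 x0).Finite :=
    hfin.subset (Set.inter_subset_inter_right _ Set.Ioc_subset_Icc_self)
  obtain ⟨m, ⟨hm1, hm2⟩, hmin⟩ := Set.exists_min_image _ id hfin2 ⟨x0, hx0, hx0p, le_refl _⟩
  refine ⟨m, hm2.1, hm1, fun y hy hAy => ?_⟩
  by_cases hyx : y ≤ x0
  · exact hmin y ⟨hAy, hy, hyx⟩
  · exact hm2.2.trans (not_le.mp hyx).le

lemma core (a b : ℕ) (ha : 1 ≤ a) (hb : 1 ≤ b) (hab : a ≠ b)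
    (A : ℝ → ℕ) (m : ℝ) (hm : 0 < m) (hAm : A m ≠ 0)
    (hmin : ∀ y, 0 < y → A y ≠ 0 → m ≤ y)
    (γ δ γ' δ' : ℝ) (hγ : 0 < γ) (hδ : 0 < δ) (hγ' : 0 < γ') (hδ' : 0 < δ')
    (h : ∀ x : ℝ, a * A (x / γ) + b * A (x / δ) = a * A (x / γ') + b * A (x / δ'))
    (hle : γ ≤ δ) :
    γ = γ' ∧ δ = δ' := by
  have self : ∀ s : ℝ, 0 < s → A (s * m / s) = A m := fun s hs => by
    rw [mul_div_cancel_left₀ _ hs.ne']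
  have K : ∀ s t : ℝ, 0 < s → 0 < t → A (s * m / t) ≠ 0 → t ≤ s := by
    intro s t hs ht hA
    have := hmin _ (by positivity) hA
    rw [le_div_iff₀ ht] at this
    nlinarith
  have L : ∀ s t : ℝ, 0 < s → 0 < t → (∀ x, A (x / s) = A (x / t)) → s = t := by
    intro s t hs ht hA
    apply le_antisymm
    · apply K t s ht hs
      rw [hA, self t ht]; exact hAm
    · apply K s t hs ht
      rw [← hA, self s hs]; exact hAm
  have Am : 0 < A m := Nat.pos_of_ne_zero hAm
  have E1 : γ' ≤ γ ∨ δ' ≤ γ := by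
    by_contra! hc
    have h1 : A (γ * m / γ') = 0 := by
      by_contra h0; exact absurd (K _ _ hγ hγ' h0) (not_le.mpr hc.1)
    have h2 : A (γ * m / δ') = 0 := by
      by_contra h0; exact absurd (K _ _ hγ hδ' h0) (not_le.mpr hc.2)
    have := h (γ * m)
    rw [self γ hγ, h1, h2] at this
    nlinarith [Nat.mul_pos ha Am, Nat.zero_le (b * A (γ * m / δ))]
  have E2 : ∀ s, 0 < s → a * A (s * m / γ') + b * A (s * m / δ') ≠ 0 → γ ≤ s := by
    intro s hs hne
    by_contra! hc
    have h1 : A (s * m / γ) = 0 := by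
      by_contra h0; exact absurd (K _ _ hs hγ h0) (not_le.mpr hc)
    have h2 : A (s * m / δ) = 0 := by
      by_contra h0; exact absurd (K _ _ hs hδ h0) (not_le.mpr (hc.trans_le hle))
    apply hne
    rw [← h, h1, h2]; simp
  have E3 : γ ≤ γ' := by
    apply E2 _ hγ'
    rw [self _ hγ']
    have := Nat.mul_pos ha Am
    omega
  have E4 : γ ≤ δ' := by
    apply E2 _ hδ'
    rw [self _ hδ']
    have := Nat.mul_pos hb Am
    omega
  have F1 : γ = γ' → γ = γ' ∧ δ = δ' := by
    intro e
    refine ⟨e, L _ _ hδ hδ' fun x => ?_⟩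
    have := h x
    rw [e] at this
    exact Nat.eq_of_mul_eq_mul_left hb (Nat.add_left_cancel this)
  rcases E1 with e | e
  · exact F1 (le_antisymm E3 e)
  · have e : γ = δ' := le_antisymm E4 e
    subst e
    have hx := h (γ * m)
    rw [self γ hγ] at hx
    rcases lt_or_gt_of_ne hab with hl | hl
    · have hd : δ ≤ γ := by
        apply K _ _ hγ hδ
        intro h0
        rw [h0] at hx
        have := Nat.mul_lt_mul_of_pos_right hl Am
        omega
      have hd : δ = γ := le_antisymm hd hle
      refine ⟨L _ _ hγ hγ' fun x => ?_, hd⟩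
      have := h x
      rw [hd] at this
      exact Nat.eq_of_mul_eq_mul_left ha (Nat.add_right_cancel this)
    · apply F1
      refine le_antisymm E3 (K _ _ hγ hγ' ?_)
      intro h0
      rw [h0] at hx
      have := Nat.mul_lt_mul_of_pos_right hl Am
      omega

/-- Theorem 3.18 (case `a ≠ b`): injectivity of `(γ, δ) ↦ a·(γA) ⊍ b·(δA)`. -/
theorem stmt_5 (a b : ℕ) (ha : 1 ≤ a) (hb : 1 ≤ b) (hab : a ≠ b)
    (A : ℝ → ℕ)
    (hclosed : IsClosed {x : ℝ | A x ≠ 0}) (hdisc : DiscreteTopology {x : ℝ | A x ≠ 0})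
    (hsub : {x : ℝ | A x ≠ 0} ⊆ Set.Ici (0 : ℝ))
    (hpos : ∃ x : ℝ, A x ≠ 0 ∧ 0 < x)
    (γ δ γ' δ' : ℝ) (hγ : 0 < γ) (hδ : 0 < δ) (hγ' : 0 < γ') (hδ' : 0 < δ')
    (h : ∀ x : ℝ, a * A (x / γ) + b * A (x / δ) = a * A (x / γ') + b * A (x / δ')) :
    γ = γ' ∧ δ = δ' := by

  obtain ⟨m, hm, hAm, hmin⟩ := exists_min_pos A hclosed hdisc hpos
  rcases le_total γ δ with hle | hle
  · exact core a b ha hb hab A m hm hAm hmin γ δ γ' δ' hγ hδ hγ' hδ' h hle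
  · refine (core b a hb ha hab.symm A m hm hAm hmin δ γ δ' γ' hδ hγ hδ' hγ' (fun x => ?_) hle).symm
    have := h x
    omega
end

section
/- Let a ≥ 1 be a natural number, and let A : ℝ → ℕ be a weighted set whose support is a closed, discrete subset of [0,∞) containing at least one positive element. If γ, δ, γ', δ' > 0 are reals such that for every x ∈ ℝ one has a·A(x/γ) + a·A(x/δ) = a·A(x/γ') + a·A(x/δ'), then {γ, δ} = {γ', δ'} as unordered pairs (i.e., (γ,δ) = (γ',δ') or (γ,δ) = (δ',γ')). -/
/-- Theorem 3.18 (case `n = 2p`): injectivity of `{γ, δ} ↦ a·(γA) ⊍ a·(δA)` on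
unordered pairs. -/
theorem stmt_6 (a : ℕ) (ha : 1 ≤ a)
    (A : ℝ → ℕ)
    (hclosed : IsClosed {x : ℝ | A x ≠ 0}) (hdisc : DiscreteTopology {x : ℝ | A x ≠ 0})
    (hsub : {x : ℝ | A x ≠ 0} ⊆ Set.Ici (0 : ℝ))
    (hpos : ∃ x : ℝ, A x ≠ 0 ∧ 0 < x)
    (γ δ γ' δ' : ℝ) (hγ : 0 < γ) (hδ : 0 < δ) (hγ' : 0 < γ') (hδ' : 0 < δ')
    (h : ∀ x : ℝ, a * A (x / γ) + a * A (x / δ) = a * A (x / γ') + a * A (x / δ')) :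
    (γ = γ' ∧ δ = δ') ∨ (γ = δ' ∧ δ = γ') := by
  have hfin : ({x : ℝ | A x ≠ 0} ∩ Set.Icc 0 hpos.choose).Finite := by
    have hc : IsCompact ({x : ℝ | A x ≠ 0} ∩ Set.Icc 0 hpos.choose) :=
      isCompact_Icc.inter_left hclosed
    have hd : IsDiscrete {x : ℝ | A x ≠ 0} := ⟨hdisc⟩
    exact hc.finite (hd.mono Set.inter_subset_left)
  have hx0 := hpos.choose_spec
  generalize hpos.choose = x0 at hfin hx0
  obtain ⟨m, hm0, hAm, hmin⟩ : ∃ m : ℝ, 0 < m ∧ A m ≠ 0 ∧ ∀ x, 0 < x → A x ≠ 0 → m ≤ x := by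
    have hfin2 : {x : ℝ | A x ≠ 0 ∧ 0 < x ∧ x ≤ x0}.Finite :=
      hfin.subset fun x hx => ⟨hx.1, hx.2.1.le, hx.2.2⟩
    obtain ⟨m, hm, hmm⟩ := Set.exists_min_image _ id hfin2 ⟨x0, hx0.1, hx0.2, le_refl x0⟩
    refine ⟨m, hm.2.1, hm.1, fun x hx hAx => ?_⟩
    by_cases hxx : x ≤ x0
    · exact hmm x ⟨hAx, hx, hxx⟩
    · exact hm.2.2.trans (not_le.mp hxx).le
  have h1 : ∀ x : ℝ, A (x / γ) + A (x / δ) = A (x / γ') + A (x / δ') := fun x => by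
    have := h x
    rw [← mul_add, ← mul_add] at this
    exact Nat.eq_of_mul_eq_mul_left ha this
  have key : ∀ s t : ℝ, 0 < s → 0 < t → A (s * m / t) ≠ 0 → t ≤ s := by
    intro s t hs ht hA
    have := hmin _ (by positivity) hA
    rw [le_div_iff₀ ht] at this
    nlinarith
  have self : ∀ s : ℝ, 0 < s → A (s * m / s) ≠ 0 := by
    intro s hs
    rwa [mul_div_cancel_left₀ _ hs.ne']
  have eqs : ∀ s t : ℝ, 0 < s → 0 < t → (∀ x, A (x / s) = A (x / t)) → s = t := by
    intro s t hs ht hst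
    apply le_antisymm
    · exact key t s ht hs (by rw [hst]; exact self t ht)
    · exact key s t hs ht (by rw [← hst]; exact self s hs)
  have c1 : γ ≤ γ' ∨ δ ≤ γ' := by
    by_contra hc
    have e := h1 (γ' * m)
    have := self γ' hγ'
    have := key γ' γ hγ' hγ
    have := key γ' δ hγ' hδ
    grind
  have c2 : γ ≤ δ' ∨ δ ≤ δ' := by
    by_contra hc
    have e := h1 (δ' * m)
    have := self δ' hδ'
    have := key δ' γ hδ' hγ
    have := key δ' δ hδ' hδ
    grind
  have c3 : γ' ≤ γ ∨ δ' ≤ γ := by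
    by_contra hc
    have e := h1 (γ * m)
    have := self γ hγ
    have := key γ γ' hγ hγ'
    have := key γ δ' hγ hδ'
    grind
  have c4 : γ' ≤ δ ∨ δ' ≤ δ := by
    by_contra hc
    have e := h1 (δ * m)
    have := self δ hδ
    have := key δ γ' hδ hγ'
    have := key δ δ' hδ hδ'
    grind
  have c5 : γ = γ' ∨ γ = δ' ∨ δ = γ' ∨ δ = δ' := by grind
  rcases c5 with e | e | e | e
  · subst e
    exact Or.inl ⟨rfl, eqs _ _ hδ hδ' fun x => by have := h1 x; omega⟩
  · subst e
    exact Or.inr ⟨rfl, eqs _ _ hδ hγ' fun x => by have := h1 x; omega⟩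
  · subst e
    exact Or.inr ⟨eqs _ _ hγ hδ' fun x => by have := h1 x; omega, rfl⟩
  · subst e
    exact Or.inl ⟨eqs _ _ hγ hγ' fun x => by have := h1 x; omega, rfl⟩
end

section
/- Let n ≥ 1, let Λ₁ and Λ₂ be full-rank lattices in ℝⁿ, let α, β > 0 be reals and let p be a natural number with 1 ≤ p ≤ n. Then Spec(Λ₁,α,β,p) = Spec(Λ₂,α,β,p) (as functions ℝ → ℕ) if and only if for every x ∈ ℝ, Nat.card {l ∈ Λ₁* : 4π²‖l‖² = x} = Nat.card {l ∈ Λ₂* : 4π²‖l‖² = x}. -/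
open Real
open scoped RealInnerProductSpace

/-- The dual lattice `Λ* = {v : ∀ w ∈ Λ, ⟨v,w⟩ ∈ ℤ}` of a lattice `Λ ⊆ ℝⁿ`. -/
def dualLattice {n : ℕ} (L : Submodule ℤ (EuclideanSpace ℝ (Fin n))) :
    Set (EuclideanSpace ℝ (Fin n)) :=
  {v | ∀ w ∈ L, ∃ m : ℤ, ⟪v, w⟫ = (m : ℝ)}

/-- The spectrum, with multiplicities, of the generalized Hodge-Laplace operator
`F_{αβ} = α dδ + β δd` on `p`-forms on the flat torus `ℝⁿ/Λ` (Theorem 3.9):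
`x ↦ C(n-1,p-1)·#{l ∈ Λ* : 4π²α‖l‖² = x} + C(n-1,p)·#{l ∈ Λ* : 4π²β‖l‖² = x}`. -/
noncomputable def torusSpec {n : ℕ} (L : Submodule ℤ (EuclideanSpace ℝ (Fin n)))
    (α β : ℝ) (p : ℕ) : ℝ → ℕ := fun x =>
  (n - 1).choose (p - 1) *
      Nat.card {l : EuclideanSpace ℝ (Fin n) //
        l ∈ dualLattice L ∧ 4 * π ^ 2 * α * ‖l‖ ^ 2 = x} +
    (n - 1).choose p *
      Nat.card {l : EuclideanSpace ℝ (Fin n) //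
        l ∈ dualLattice L ∧ 4 * π ^ 2 * β * ‖l‖ ^ 2 = x}

/-- Number of dual lattice vectors with `4π²‖l‖² = x`. -/
noncomputable def cnt {n : ℕ} (L : Submodule ℤ (EuclideanSpace ℝ (Fin n))) (x : ℝ) : ℕ :=
  Nat.card {l : EuclideanSpace ℝ (Fin n) // l ∈ dualLattice L ∧ 4 * π ^ 2 * ‖l‖ ^ 2 = x}

lemma cnt_scale {n : ℕ} (L : Submodule ℤ (EuclideanSpace ℝ (Fin n))) (α : ℝ) (hα : 0 < α)
    (x : ℝ) :
    Nat.card {l : EuclideanSpace ℝ (Fin n) //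
        l ∈ dualLattice L ∧ 4 * π ^ 2 * α * ‖l‖ ^ 2 = x} = cnt L (x / α) := by
  unfold cnt
  refine Nat.card_congr (Equiv.subtypeEquivRight fun l => ?_)
  rw [eq_div_iff hα.ne']
  constructor
  · rintro ⟨h, h'⟩
    exact ⟨h, by rw [← h']; ring⟩
  · rintro ⟨h, h'⟩
    exact ⟨h, by rw [← h']; ring⟩

lemma dual_finite {n : ℕ} (L : Submodule ℤ (EuclideanSpace ℝ (Fin n)))
    [DiscreteTopology L] [IsZLattice ℝ L] (R : ℝ) :
    {l | l ∈ dualLattice L ∧ ‖l‖ ≤ R}.Finite := by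
  obtain ⟨S, hS⟩ : L.FG := ZLattice.FG ℝ L
  have hSL : ∀ s ∈ S, s ∈ L := fun s hs => hS ▸ Submodule.subset_span hs
  let f : EuclideanSpace ℝ (Fin n) → (S → ℝ) := fun v s => ⟪v, (s : EuclideanSpace ℝ (Fin n))⟫
  have hinj : Function.Injective f := by
    intro v w hvw
    have h1 : ∀ s ∈ S, ⟪v - w, s⟫ = 0 := by
      intro s hs
      have := congrFun hvw ⟨s, hs⟩
      simp only [f] at this
      rw [inner_sub_left, this, sub_self]
    have h2 : ∀ s ∈ L, ⟪v - w, s⟫ = 0 := by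
      intro s hs
      rw [← hS] at hs
      induction hs using Submodule.span_induction with
      | mem x hx => exact h1 x hx
      | zero => simp
      | add x y _ _ hx hy => rw [inner_add_right, hx, hy, add_zero]
      | smul a x _ hx =>
        rw [← Int.cast_smul_eq_zsmul ℝ a x, inner_smul_right, hx, mul_zero]
    have h3 : ∀ s ∈ Submodule.span ℝ (L : Set (EuclideanSpace ℝ (Fin n))), ⟪v - w, s⟫ = 0 := by
      intro s hs
      induction hs using Submodule.span_induction with
      | mem x hx => exact h2 x hx
      | zero => simp
      | add x y _ _ hx hy => rw [inner_add_right, hx, hy, add_zero]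
      | smul a x _ hx => rw [inner_smul_right, hx, mul_zero]
    have h4 := h3 (v - w) (by rw [IsZLattice.span_top]; trivial)
    exact sub_eq_zero.mp (inner_self_eq_zero.mp h4)
  have hfin : (Set.pi Set.univ fun s : S =>
      (fun m : ℤ => (m : ℝ)) '' Set.Icc (-⌈R * ‖(s : EuclideanSpace ℝ (Fin n))‖⌉)
        ⌈R * ‖(s : EuclideanSpace ℝ (Fin n))‖⌉).Finite :=
    Set.Finite.pi fun s => (Set.finite_Icc _ _).image _
  refine Set.Finite.subset (hfin.preimage hinj.injOn) ?_
  rintro l ⟨hl, hlR⟩ s -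
  obtain ⟨m, hm⟩ := hl s (hSL s s.2)
  refine ⟨m, ?_, hm.symm⟩
  have hb : |(m : ℝ)| ≤ R * ‖(s : EuclideanSpace ℝ (Fin n))‖ := by
    rw [← hm]
    exact (abs_real_inner_le_norm _ _).trans (by gcongr)
  have hb' := hb.trans (Int.le_ceil _)
  have : |m| ≤ ⌈R * ‖(s : EuclideanSpace ℝ (Fin n))‖⌉ := by exact_mod_cast hb'
  exact Set.mem_Icc.mpr (abs_le.mp this)

lemma cnt_support {n : ℕ} (L : Submodule ℤ (EuclideanSpace ℝ (Fin n)))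
    [DiscreteTopology L] [IsZLattice ℝ L] (R : ℝ) :
    {t | cnt L t ≠ 0 ∧ t ≤ R}.Finite := by
  refine ((dual_finite L (R + 1)).image fun l => 4 * π ^ 2 * ‖l‖ ^ 2).subset ?_
  rintro t ⟨ht, htR⟩
  obtain ⟨⟨l, hl, hlt⟩⟩ := (Nat.card_ne_zero.mp ht).1
  refine ⟨l, ⟨hl, ?_⟩, hlt⟩
  have hpi : 1 ≤ π ^ 2 := by nlinarith [Real.pi_gt_three]
  have h0 : 0 ≤ ‖l‖ ^ 2 := by positivity
  nlinarith [sq_nonneg (‖l‖ - 1), mul_nonneg (sub_nonneg.mpr hpi) h0]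

lemma cnt_nonneg {n : ℕ} (L : Submodule ℤ (EuclideanSpace ℝ (Fin n))) (t : ℝ)
    (ht : cnt L t ≠ 0) : 0 ≤ t := by
  obtain ⟨⟨l, hl, hlt⟩⟩ := (Nat.card_ne_zero.mp ht).1
  rw [← hlt]; positivity

lemma key (f g : ℝ → ℕ) (hf : ∀ R, {t | f t ≠ 0 ∧ t ≤ R}.Finite)
    (hg : ∀ R, {t | g t ≠ 0 ∧ t ≤ R}.Finite) (hf0 : ∀ t, f t ≠ 0 → 0 ≤ t)
    (hg0 : ∀ t, g t ≠ 0 → 0 ≤ t) (a b : ℕ) (ha : a ≠ 0) (α β : ℝ) (hα : 0 < α) (hαβ : α < β)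
    (h : ∀ x, a * f (x / α) + b * f (x / β) = a * g (x / α) + b * g (x / β)) : f = g := by
  by_contra hne
  obtain ⟨t, ht⟩ := Function.ne_iff.mp hne
  have hfin : {s | f s ≠ g s ∧ s ≤ t}.Finite := by
    refine ((hf t).union (hg t)).subset ?_
    rintro s ⟨hs, hst⟩
    by_cases h1 : f s = 0
    · exact Or.inr ⟨fun h2 => hs (h1.trans h2.symm), hst⟩
    · exact Or.inl ⟨h1, hst⟩
  obtain ⟨m, ⟨hm, hmt⟩, hmin⟩ := Set.exists_min_image _ id hfin ⟨t, ht, le_rfl⟩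
  have hβ := hα.trans hαβ
  have hm0 : 0 ≤ m := by
    by_cases h1 : f m = 0
    · exact hg0 m fun h2 => hm (h1.trans h2.symm)
    · exact hf0 m h1
  have hx := h (α * m)
  rw [mul_div_cancel_left₀ _ hα.ne'] at hx
  rcases hm0.eq_or_lt with rfl | hpos
  · simp only [mul_zero, zero_div, ← add_mul] at hx
    exact hm (Nat.eq_of_mul_eq_mul_left (by omega) hx)
  · have hlt : α * m / β < m := by
      rw [div_lt_iff₀ hβ]; nlinarith
    have he : f (α * m / β) = g (α * m / β) := by
      by_contra h1
      exact absurd (hmin _ ⟨h1, hlt.le.trans hmt⟩) (not_le.mpr hlt)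
    rw [he] at hx
    exact hm (Nat.eq_of_mul_eq_mul_left (Nat.pos_of_ne_zero ha) (Nat.add_right_cancel hx))

/-- Theorem 3.17: `F_{αβ,p}` is isospectral on two flat tori iff the Laplacian on
functions is. -/
theorem stmt_7 (n : ℕ) (hn : 1 ≤ n)
    (L₁ L₂ : Submodule ℤ (EuclideanSpace ℝ (Fin n)))
    [DiscreteTopology L₁] [IsZLattice ℝ L₁] [DiscreteTopology L₂] [IsZLattice ℝ L₂]
    (α β : ℝ) (hα : 0 < α) (hβ : 0 < β) (p : ℕ) (hp : 1 ≤ p) (hpn : p ≤ n) :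
    torusSpec L₁ α β p = torusSpec L₂ α β p ↔
      ∀ x : ℝ,
        Nat.card {l : EuclideanSpace ℝ (Fin n) //
          l ∈ dualLattice L₁ ∧ 4 * π ^ 2 * ‖l‖ ^ 2 = x} =
        Nat.card {l : EuclideanSpace ℝ (Fin n) //
          l ∈ dualLattice L₂ ∧ 4 * π ^ 2 * ‖l‖ ^ 2 = x} := by
  have hspec : ∀ (L : Submodule ℤ (EuclideanSpace ℝ (Fin n))) (x : ℝ), torusSpec L α β p x =
      (n - 1).choose (p - 1) * cnt L (x / α) + (n - 1).choose p * cnt L (x / β) := by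
    intro L x
    rw [torusSpec, cnt_scale L α hα, cnt_scale L β hβ]
  change _ ↔ ∀ x, cnt L₁ x = cnt L₂ x
  constructor
  · intro h
    have h' : ∀ x, _ := fun x => congrFun h x
    simp only [hspec] at h'
    have ha : (n - 1).choose (p - 1) ≠ 0 := (Nat.choose_pos (by omega)).ne'
    generalize (n - 1).choose (p - 1) = a at *
    generalize (n - 1).choose p = b at *
    apply congrFun
    rcases lt_trichotomy α β with hlt | heq | hgt
    · exact key _ _ (cnt_support L₁) (cnt_support L₂) (cnt_nonneg L₁) (cnt_nonneg L₂) a b ha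
        α β hα hlt h'
    · subst heq
      funext x
      have hx := h' (α * x)
      rw [mul_div_cancel_left₀ _ hα.ne', ← add_mul, ← add_mul] at hx
      exact Nat.eq_of_mul_eq_mul_left (by omega) hx
    · by_cases hb : b = 0
      · subst hb
        funext x
        have hx := h' (α * x)
        rw [mul_div_cancel_left₀ _ hα.ne', zero_mul, zero_mul] at hx
        exact Nat.eq_of_mul_eq_mul_left (Nat.pos_of_ne_zero ha) hx
      · exact key _ _ (cnt_support L₁) (cnt_support L₂) (cnt_nonneg L₁) (cnt_nonneg L₂) b a hb
          β α hβ hgt (fun x => by have := h' x; omega)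
  · intro h
    funext x
    rw [hspec, hspec, h, h]
end

section
/- Let n ≥ 1, let Λ be a full-rank lattice in ℝⁿ, let α, α', β, β' > 0 be reals and let p be a natural number with 1 ≤ p ≤ n−1 and n ≠ 2p. Then Spec(Λ,α,β,p) = Spec(Λ,α',β',p) (as functions ℝ → ℕ) if and only if α = α' and β = β'. -/
open Real
open scoped RealInnerProductSpace

lemma dual_exists_min {n : ℕ} (hn : 1 ≤ n) (L : Submodule ℤ (EuclideanSpace ℝ (Fin n)))
    [DiscreteTopology L] [IsZLattice ℝ L] :
    ∃ v ∈ dualLattice L, v ≠ 0 ∧ (∀ w ∈ dualLattice L, w ≠ 0 → ‖v‖ ≤ ‖w‖) ∧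
      {w | w ∈ dualLattice L ∧ ‖w‖ = ‖v‖}.Finite := by
  classical
  let b0 := Module.Free.chooseBasis ℤ L
  let b := b0.ofZLatticeBasis ℝ L
  have hspan : Submodule.span ℤ (Set.range b) = L := b0.ofZLatticeBasis_span ℝ
  let B : LinearMap.BilinForm ℝ (EuclideanSpace ℝ (Fin n)) := innerₗ (EuclideanSpace ℝ (Fin n))
  have hB : B.Nondegenerate := by
    refine ⟨fun x hx => ?_, fun x hx => ?_⟩
    · have := hx x
      simpa [B] using this
    · have := hx x
      simpa [B] using this
  have hD : dualLattice L = (Submodule.span ℤ (Set.range (B.dualBasis hB b)) : Set _) := by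
    rw [← LinearMap.BilinForm.dualSubmodule_span_of_basis B hB b, hspan]
    ext v
    simp only [dualLattice, Set.mem_ofPred_eq, SetLike.mem_coe,
      LinearMap.BilinForm.mem_dualSubmodule, Submodule.mem_one, B]
    refine forall₂_congr fun w _ => ?_
    constructor
    · rintro ⟨m, hm⟩
      exact ⟨m, by simpa using hm.symm⟩
    · rintro ⟨m, hm⟩
      exact ⟨m, by simpa using hm.symm⟩
  set d := B.dualBasis hB b
  have hfin : ∀ r : ℝ, {w | w ∈ dualLattice L ∧ ‖w‖ ≤ r}.Finite := by
    intro r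
    rw [hD]
    have := ZSpan.setFinite_inter d (Metric.isBounded_closedBall (x := (0 : EuclideanSpace ℝ (Fin n))) (r := r))
    refine this.subset ?_
    rintro w ⟨h1, h2⟩
    exact ⟨by simpa using h2, h1⟩
  have hne : Nonempty (Module.Free.ChooseBasisIndex ℤ L) := by
    have h := Module.finrank_eq_card_basis b
    rw [finrank_euclideanSpace_fin] at h
    exact Fintype.card_pos_iff.mp (by omega)
  obtain ⟨i⟩ := hne
  have hi : d i ∈ dualLattice L := by
    rw [hD]; exact Submodule.subset_span ⟨i, rfl⟩
  have hfin2 : {w | (w ∈ dualLattice L ∧ ‖w‖ ≤ ‖d i‖) ∧ w ≠ 0}.Finite :=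
    (hfin ‖d i‖).subset fun w hw => hw.1
  obtain ⟨v, hv, hmin⟩ := Set.exists_min_image _ (fun w => ‖w‖) hfin2
    ⟨d i, ⟨hi, le_rfl⟩, d.ne_zero i⟩
  refine ⟨v, hv.1.1, hv.2, fun w hw hw0 => ?_, (hfin ‖v‖).subset fun w hw => ⟨hw.1, hw.2.le⟩⟩
  rcases le_total ‖w‖ ‖d i‖ with h | h
  · exact hmin w ⟨⟨hw, h⟩, hw0⟩
  · exact hv.1.2.trans h

lemma abstract_spec (f : ℝ → ℕ) (m : ℝ) (hm : 0 < m) (hfm : 0 < f m)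
    (hf : ∀ t, 0 < t → t < m → f t = 0) (a b : ℕ) (ha : 0 < a) (hb : 0 < b) (hab : a ≠ b)
    (α α' β β' : ℝ) (hα : 0 < α) (hα' : 0 < α') (hβ : 0 < β) (hβ' : 0 < β')
    (h : ∀ x, a * f (x / α) + b * f (x / β) = a * f (x / α') + b * f (x / β')) :
    α = α' ∧ β = β' := by
  have hlt : ∀ s γ : ℝ, 0 < s → s < γ → f (m * s / γ) = 0 := by
    intro s γ hs hγ
    have hγ0 := hs.trans hγ
    apply hf
    · positivity
    · rw [div_lt_iff₀ hγ0]; exact mul_lt_mul_of_pos_left hγ hm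
  have heq : ∀ s : ℝ, 0 < s → f (m * s / s) = f m := by
    intro s hs
    rw [mul_div_cancel_right₀ _ hs.ne']
  have one : ∀ γ γ' : ℝ, 0 < γ → 0 < γ' → (∀ x, f (x / γ) = f (x / γ')) → γ = γ' := by
    intro γ γ' h1 h2 h3
    rcases lt_trichotomy γ γ' with h4 | h4 | h4
    · have := h3 (m * γ)
      rw [hlt _ _ h1 h4, heq _ h1] at this
      omega
    · exact h4
    · have := h3 (m * γ')
      rw [hlt _ _ h2 h4, heq _ h2] at this
      omega
  have hA : 0 < a * f m := Nat.mul_pos ha hfm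
  have hBm : 0 < b * f m := Nat.mul_pos hb hfm
  have hAB : a * f m ≠ b * f m := fun h => hab (Nat.eq_of_mul_eq_mul_right hfm h)
  have hαα : α = α' → α = α' ∧ β = β' := by
    rintro rfl
    refine ⟨rfl, one _ _ hβ hβ' fun x => ?_⟩
    exact Nat.eq_of_mul_eq_mul_left hb (Nat.add_left_cancel (h x))
  have hββ : β = β' → α = α' ∧ β = β' := by
    rintro rfl
    refine ⟨one _ _ hα hα' fun x => ?_, rfl⟩
    exact Nat.eq_of_mul_eq_mul_left ha (Nat.add_right_cancel (h x))
  -- values at level `m * s`, for `s` at most all four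
  have key : ∀ s γ : ℝ, 0 < s → s ≤ γ → (s = γ ∧ f (m * s / γ) = f m) ∨
      (s < γ ∧ f (m * s / γ) = 0) := by
    intro s γ hs hsγ
    rcases hsγ.lt_or_eq with h1 | h1
    · exact Or.inr ⟨h1, hlt _ _ hs h1⟩
    · subst h1; exact Or.inl ⟨rfl, heq _ hs⟩
  obtain ⟨s, hs, h1, h2, h3, h4, h5⟩ : ∃ s : ℝ, 0 < s ∧ s ≤ α ∧ s ≤ β ∧ s ≤ α' ∧ s ≤ β' ∧
      (s = α ∨ s = β ∨ s = α' ∨ s = β') := by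
    refine ⟨min (min α β) (min α' β'), by positivity, ?_, ?_, ?_, ?_, ?_⟩
    · simp
    · simp
    · simp
    · simp
    · rcases min_choice (min α β) (min α' β') with e | e <;> rw [e]
      · rcases min_choice α β with e | e <;> simp [e]
      · rcases min_choice α' β' with e | e <;> simp [e]
  have hx := h (m * s)
  rcases key s α hs h1 with ⟨e1, k1⟩ | ⟨e1, k1⟩ <;>
  rcases key s β hs h2 with ⟨e2, k2⟩ | ⟨e2, k2⟩ <;>
  rcases key s α' hs h3 with ⟨e3, k3⟩ | ⟨e3, k3⟩ <;>
  rcases key s β' hs h4 with ⟨e4, k4⟩ | ⟨e4, k4⟩ <;>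
  rw [k1, k2, k3, k4] at hx <;>
  first
  | exact hαα (e1.symm.trans e3)
  | exact hββ (e2.symm.trans e4)
  | (exfalso; simp only [mul_zero] at hx; omega)
  | (exfalso; rcases h5 with h5 | h5 | h5 | h5 <;> linarith)

/-- Theorem 3.18 (case `n ≠ 2p`): on a fixed flat torus, `F_{αβ,p}` and `F_{α'β',p}` are
isospectral iff `(α, β) = (α', β')`. -/
theorem stmt_8 (n : ℕ) (hn : 1 ≤ n)
    (L : Submodule ℤ (EuclideanSpace ℝ (Fin n)))
    [DiscreteTopology L] [IsZLattice ℝ L]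
    (α α' β β' : ℝ) (hα : 0 < α) (hα' : 0 < α') (hβ : 0 < β) (hβ' : 0 < β')
    (p : ℕ) (hp : 1 ≤ p) (hpn : p ≤ n - 1) (hn2p : n ≠ 2 * p) :
    torusSpec L α β p = torusSpec L α' β' p ↔ α = α' ∧ β = β' := by
  constructor
  swap
  · rintro ⟨rfl, rfl⟩; rfl
  intro h
  obtain ⟨v, hv, hv0, hmin, hfin⟩ := dual_exists_min hn L
  let f : ℝ → ℕ := fun t => Nat.card {l : EuclideanSpace ℝ (Fin n) //
        l ∈ dualLattice L ∧ 4 * π ^ 2 * ‖l‖ ^ 2 = t}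
  have hpi : 0 < 4 * π ^ 2 := by positivity
  have hvn : 0 < ‖v‖ := norm_pos_iff.mpr hv0
  have hcard : ∀ γ x : ℝ, 0 < γ → Nat.card {l : EuclideanSpace ℝ (Fin n) //
        l ∈ dualLattice L ∧ 4 * π ^ 2 * γ * ‖l‖ ^ 2 = x} = f (x / γ) := by
    intro γ x hγ
    refine Nat.card_congr (Equiv.subtypeEquivRight fun l => and_congr_right fun _ => ?_)
    rw [eq_div_iff hγ.ne']
    constructor <;> intro h <;> linarith
  have hchoose : (n - 1).choose (p - 1) ≠ (n - 1).choose p := by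
    intro he
    obtain ⟨q, rfl⟩ : ∃ q, p = q + 1 := ⟨p - 1, by omega⟩
    have h1 := Nat.choose_succ_right_eq (n - 1) q
    simp only [Nat.add_sub_cancel] at he
    rw [← he] at h1
    have h2 := Nat.eq_of_mul_eq_mul_left (Nat.choose_pos (by omega)) h1
    omega
  refine abstract_spec f (4 * π ^ 2 * ‖v‖ ^ 2) (by positivity) ?_ ?_ ((n - 1).choose (p - 1))
    ((n - 1).choose p) (Nat.choose_pos (by omega)) (Nat.choose_pos hpn) hchoose
    α α' β β' hα hα' hβ hβ' ?_
  · have : Finite {l : EuclideanSpace ℝ (Fin n) //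
        l ∈ dualLattice L ∧ 4 * π ^ 2 * ‖l‖ ^ 2 = 4 * π ^ 2 * ‖v‖ ^ 2} := by
      refine (hfin.subset (s := {w | w ∈ dualLattice L ∧ ‖w‖ = ‖v‖})
        (t := {l | l ∈ dualLattice L ∧ 4 * π ^ 2 * ‖l‖ ^ 2 = 4 * π ^ 2 * ‖v‖ ^ 2}) ?_).to_subtype
      rintro l ⟨h1, h2⟩
      refine ⟨h1, ?_⟩
      have := mul_left_cancel₀ hpi.ne' h2
      exact (sq_eq_sq₀ (norm_nonneg _) (norm_nonneg _)).mp this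
    have : Nonempty {l : EuclideanSpace ℝ (Fin n) //
        l ∈ dualLattice L ∧ 4 * π ^ 2 * ‖l‖ ^ 2 = 4 * π ^ 2 * ‖v‖ ^ 2} := ⟨⟨v, hv, rfl⟩⟩
    exact Nat.card_pos
  · intro t ht htm
    have : IsEmpty {l : EuclideanSpace ℝ (Fin n) //
        l ∈ dualLattice L ∧ 4 * π ^ 2 * ‖l‖ ^ 2 = t} := by
      refine ⟨fun ⟨l, hl, hlt⟩ => ?_⟩
      have hl0 : l ≠ 0 := by
        rintro rfl
        simp at hlt
        linarith
      have h1 : ‖v‖ ^ 2 ≤ ‖l‖ ^ 2 := by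
        have := hmin l hl hl0
        gcongr
      have := mul_le_mul_of_nonneg_left h1 hpi.le
      linarith
    exact Nat.card_of_isEmpty
  · intro x
    have := congrFun h x
    simp only [torusSpec] at this
    rwa [hcard α x hα, hcard β x hβ, hcard α' x hα', hcard β' x hβ'] at this
end

section
/- Let Λ₁ and Λ₂ be full-rank lattices in ℝ², let α, β > 0 be reals and let p ∈ {1, 2}. If Spec(Λ₁,α,β,p) = Spec(Λ₂,α,β,p) (as functions ℝ → ℕ), then there exists a linear isometric equivalence I : ℝ² ≃ ℝ² with I(Λ₁) = Λ₂ (i.e., the flat tori ℝ²/Λ₁ and ℝ²/Λ₂ are isometric). -/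
open Real
open scoped RealInnerProductSpace

def qf (a b c : ℝ) (z : ℤ × ℤ) : ℝ := a * (z.1:ℝ)^2 + 2*b*(z.1*z.2) + c*(z.2:ℝ)^2

lemma sq_ge_one_of_ne {x : ℤ} (h : x ≠ 0) : (1:ℝ) ≤ (x:ℝ)^2 := by
  have : (1:ℤ) ≤ x^2 := by have := pow_pos (abs_pos.mpr h) 2; rw [sq_abs] at this; omega
  exact_mod_cast this

def Red (a b c : ℝ) : Prop := 0 < a ∧ 0 ≤ b ∧ 2*b ≤ a ∧ a ≤ c

lemma qf_ge_xy {a b c : ℝ} (h : Red a b c) {z : ℤ × ℤ} (hx : z.1 ≠ 0) (hy : z.2 ≠ 0) :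
    a - 2*b + c ≤ qf a b c z := by
  obtain ⟨h1, h2, h3, h4⟩ := h
  have e : qf a b c z = b * ((z.1:ℝ)+z.2)^2 + (a-b)*(z.1:ℝ)^2 + (c-b)*(z.2:ℝ)^2 := by
    unfold qf; ring
  rw [e]
  have := mul_nonneg h2 (sq_nonneg ((z.1:ℝ)+z.2))
  have := mul_le_mul_of_nonneg_left (sq_ge_one_of_ne hx) (by linarith : 0 ≤ a - b)
  have := mul_le_mul_of_nonneg_left (sq_ge_one_of_ne hy) (by linarith : 0 ≤ c - b)
  linarith

lemma qf_ge_y {a b c : ℝ} (h : Red a b c) {z : ℤ × ℤ} (hy : z.2 ≠ 0) : c ≤ qf a b c z := by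
  by_cases hx : z.1 = 0
  · have := mul_le_mul_of_nonneg_left (sq_ge_one_of_ne hy) (by linarith [h.1, h.2.2.2] : 0 ≤ c)
    simp only [qf, hx]; push_cast; linarith
  · linarith [qf_ge_xy h hx hy, h.2.2.1]

lemma qf_ge {a b c : ℝ} (h : Red a b c) {z : ℤ × ℤ} (hz : z ≠ 0) : a ≤ qf a b c z := by
  by_cases hy : z.2 = 0
  · have hx : z.1 ≠ 0 := fun hx => hz (Prod.ext hx hy)
    have := mul_le_mul_of_nonneg_left (sq_ge_one_of_ne hx) h.1.le
    simp only [qf, hy]; push_cast; linarith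
  · linarith [qf_ge_y h hy, h.2.2.2]

lemma qf_finite {a b c : ℝ} (h : Red a b c) (t : ℝ) : {z | qf a b c z = t}.Finite := by
  obtain ⟨h1, h2, h3, h4⟩ := h
  obtain ⟨K, hK⟩ := exists_nat_gt (2 * t / a)
  apply ((Set.finite_Icc (-(K:ℤ)) K).prod (Set.finite_Icc (-(K:ℤ)) K)).subset
  rintro ⟨x, y⟩ hz
  simp only [Set.mem_ofPred_eq, qf] at hz
  rw [div_lt_iff₀ h1] at hK
  have e : a * ((x:ℝ)^2 + (y:ℝ)^2) ≤ 2 * t := by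
    rw [← hz]
    nlinarith [mul_nonneg h2 (sq_nonneg ((x:ℝ)+y)), mul_nonneg (by linarith : 0 ≤ a - 2*b) (sq_nonneg (x:ℝ)), mul_nonneg (by linarith : 0 ≤ a - 2*b) (sq_nonneg (y:ℝ)), mul_nonneg (by linarith : 0 ≤ c - a) (sq_nonneg (y:ℝ))]
  have e2 : (x:ℝ)^2 + (y:ℝ)^2 < K := by
    by_contra hh
    push Not at hh
    nlinarith
  have e3 : x^2 + y^2 < K := by exact_mod_cast e2
  have key : ∀ x : ℤ, x^2 < K → -(K:ℤ) ≤ x ∧ x ≤ K := by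
    intro x hx
    have := Int.natAbs_le_self_sq x
    omega
  exact ⟨key x (by nlinarith [sq_nonneg y]), key y (by nlinarith [sq_nonneg x])⟩

lemma fiber_eq {f g : ℤ × ℤ → ℝ} {t : ℝ} (hf : {z | f z = t}.Finite)
    (h : {z | f z = t}.ncard = {z | g z = t}.ncard) (hs : ∀ z, g z = t → f z = t)
    (z : ℤ × ℤ) (hz : f z = t) : g z = t := by
  have := Set.eq_of_subset_of_ncard_le (s := {z | g z = t}) (t := {z | f z = t}) hs h.le hf
  have h2 : z ∈ {z | f z = t} := hz
  rw [← this] at h2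
  exact h2

lemma a_le {a b c a' b' c' : ℝ} (h : Red a b c) (h' : Red a' b' c')
    (hN : ∀ t, {z | qf a b c z = t}.ncard = {z | qf a' b' c' z = t}.ncard) : a' ≤ a := by
  by_contra! hlt
  have key : ∀ z, qf a' b' c' z ≠ a := by
    intro z hz
    by_cases h0 : z = 0
    · subst h0; simp [qf] at hz; linarith [h.1]
    · linarith [qf_ge h' h0]
  exact key (1,0) (fiber_eq (qf_finite h a) (hN a) (fun z hz => (key z hz).elim) (1,0) (by simp [qf]))

lemma c_le {a b c b' c' : ℝ} (h : Red a b c) (h' : Red a b' c')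
    (hN : ∀ t, {z | qf a b c z = t}.ncard = {z | qf a b' c' z = t}.ncard) : c' ≤ c := by
  by_contra! hlt
  have key : ∀ z, qf a b' c' z = c → z.2 = 0 := by
    intro z hz
    by_contra h0
    linarith [qf_ge_y h' h0]
  have := key (0,1) (fiber_eq (qf_finite h c) (hN c)
    (fun z hz => by rw [← hz]; simp [qf, key z hz]) (0,1) (by simp [qf]))
  simp at this

lemma b_le {a b c b' : ℝ} (h : Red a b c) (h' : Red a b' c)
    (hN : ∀ t, {z | qf a b c z = t}.ncard = {z | qf a b' c z = t}.ncard) : b ≤ b' := by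
  by_contra! hlt
  have key : ∀ z, qf a b' c z = a - 2*b + c → z.1 = 0 ∨ z.2 = 0 := by
    intro z hz
    by_contra! h0
    linarith [qf_ge_xy h' h0.1 h0.2]
  have := key (1,-1) (fiber_eq (qf_finite h _) (hN (a - 2*b+c))
    (fun z hz => by rw [← hz]; rcases key z hz with h | h <;> simp [qf, h]) (1,-1) (by simp [qf]; ring))
  simp at this

lemma red_unique {a b c a' b' c' : ℝ} (h : Red a b c) (h' : Red a' b' c')
    (hN : ∀ t, {z | qf a b c z = t}.ncard = {z | qf a' b' c' z = t}.ncard) :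
    a = a' ∧ b = b' ∧ c = c' := by
  obtain rfl : a = a' := le_antisymm (a_le h' h fun t => (hN t).symm) (a_le h h' hN)
  obtain rfl : c = c' := le_antisymm (c_le h' h fun t => (hN t).symm) (c_le h h' hN)
  exact ⟨rfl, le_antisymm (b_le h h' hN) (b_le h' h fun t => (hN t).symm), rfl⟩

lemma small_eq {a b c a' b' c' : ℝ} (h : Red a b c) (h' : Red a' b' c') (t : ℝ)
    (ht : t < min a a') : {z | qf a b c z = t}.ncard = {z | qf a' b' c' z = t}.ncard := by
  congr 1
  obtain ⟨h1, h2⟩ := lt_min_iff.mp ht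
  ext z
  by_cases h0 : z = 0
  · subst h0; simp [qf]
  · have := qf_ge h h0
    have := qf_ge h' h0
    constructor <;> intro hz <;> simp only [Set.mem_ofPred_eq] at hz <;> linarith

lemma peel {f g : ℝ → ℕ} {r ε : ℝ} (hr : 0 < r) (hr1 : r < 1) (hε : 0 < ε)
    (hs : ∀ s < ε, f s = g s) (H : ∀ s, f s + f (r * s) = g s + g (r * s)) (s : ℝ) :
    f s = g s := by
  have key : ∀ k : ℕ, ∀ s, r ^ k * s < ε → f s = g s := by
    intro k
    induction k with
    | zero => intro s h; exact hs s (by simpa using h)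
    | succ k ih =>
      intro s h
      have := ih (r * s) (by rw [← mul_assoc, ← pow_succ]; exact h)
      have := H s
      omega
  have : Filter.Tendsto (fun k : ℕ => r ^ k * s) Filter.atTop (nhds (0 * s)) :=
    (tendsto_pow_atTop_nhds_zero_of_lt_one hr.le hr1).mul_const s
  rw [zero_mul] at this
  obtain ⟨k, hk⟩ := (this.eventually_lt_const hε).exists
  exact key k s hk

lemma peel' {f g : ℝ → ℕ} {α β ε : ℝ} (hα : 0 < α) (hβ : 0 < β) (hε : 0 < ε)
    (hs : ∀ s < ε, f s = g s) (H : ∀ x, f (x / α) + f (x / β) = g (x / α) + g (x / β)) (s : ℝ) :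
    f s = g s := by
  rcases lt_trichotomy α β with h | h | h
  · refine peel (div_pos hα hβ) ((div_lt_one hβ).mpr h) hε hs (fun s => ?_) s
    have := H (α * s)
    rwa [mul_div_cancel_left₀ _ hα.ne', mul_div_right_comm] at this
  · subst h
    have := H (α * s)
    rw [mul_div_cancel_left₀ _ hα.ne'] at this
    omega
  · refine peel (div_pos hβ hα) ((div_lt_one hα).mpr h) hε hs (fun s => ?_) s
    have := H (β * s)
    rw [mul_div_cancel_left₀ _ hβ.ne', mul_div_right_comm] at this
    omega

abbrev E2 := EuclideanSpace ℝ (Fin 2)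

lemma inner_nondeg : LinearMap.BilinForm.Nondegenerate (innerₗ E2) := by
  constructor
  · intro x hx
    exact inner_self_eq_zero.mp (hx x)
  · intro x hx
    exact inner_self_eq_zero.mp (hx x)

lemma dual_eq (L : Submodule ℤ E2) :
    dualLattice L = (LinearMap.BilinForm.dualSubmodule (innerₗ E2) L : Set E2) := by
  ext v
  simp only [dualLattice, Set.mem_ofPred_eq, SetLike.mem_coe, LinearMap.BilinForm.mem_dualSubmodule,
    Submodule.mem_one, innerₗ_apply_apply]
  simp [eq_comm]

lemma dual_basis (L : Submodule ℤ E2) [DiscreteTopology L] [IsZLattice ℝ L] :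
    ∃ b : Module.Basis (Fin 2) ℝ E2, dualLattice L = (Submodule.span ℤ (Set.range b) : Set E2) ∧
      ∀ w, w ∈ L ↔ ∀ v ∈ dualLattice L, ∃ m : ℤ, ⟪v, w⟫ = (m : ℝ) := by
  have hfr : Module.finrank ℤ L = 2 := by
    rw [ZLattice.rank ℝ L]; simp
  let b0 : Module.Basis (Fin 2) ℤ L := Module.finBasisOfFinrankEq ℤ L hfr
  let b1 := b0.ofZLatticeBasis ℝ L
  have hb1 : Submodule.span ℤ (Set.range b1) = L := b0.ofZLatticeBasis_span ℝ L
  refine ⟨LinearMap.BilinForm.dualBasis (innerₗ E2) inner_nondeg b1, ?_, ?_⟩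
  · rw [dual_eq, ← LinearMap.BilinForm.dualSubmodule_span_of_basis, hb1]
  · intro w
    have hs : LinearMap.BilinForm.IsSymm (innerₗ E2) := ⟨fun x y => by
      simp only [innerₗ_apply_apply]
      exact real_inner_comm y x⟩
    have := LinearMap.BilinForm.dualSubmodule_dualSubmodule_of_basis (R := ℤ) _ inner_nondeg hs b1
    rw [hb1] at this
    nth_rewrite 1 [← this]
    rw [← SetLike.mem_coe, ← dual_eq, dual_eq L]
    change (∀ v ∈ LinearMap.BilinForm.dualSubmodule (innerₗ E2) L, ∃ m : ℤ, ⟪w, v⟫ = (m : ℝ)) ↔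
      ∀ v ∈ LinearMap.BilinForm.dualSubmodule (innerₗ E2) L, ∃ m : ℤ, ⟪v, w⟫ = (m : ℝ)
    simp only [real_inner_comm w]

lemma exists_min (b : Module.Basis (Fin 2) ℝ E2) :
    ∃ u v : E2, Submodule.span ℤ {u, v} = Submodule.span ℤ (Set.range b) ∧
      ∀ u' v' : E2, Submodule.span ℤ {u', v'} = Submodule.span ℤ (Set.range b) →
        ‖u‖^2 + ‖v‖^2 ≤ ‖u'‖^2 + ‖v'‖^2 := by
  set M := Submodule.span ℤ (Set.range b) with hM
  have h0 : Submodule.span ℤ {b 0, b 1} = M := by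
    rw [hM]; congr 1; ext x; simp [Fin.exists_fin_two, eq_comm]
  set R := ‖b 0‖^2 + ‖b 1‖^2 with hR
  let S : Set (E2 × E2) := {w | Submodule.span ℤ {w.1, w.2} = M ∧ ‖w.1‖^2 + ‖w.2‖^2 ≤ R}
  have hB : (Metric.closedBall (0:E2) (Real.sqrt R) ∩ M).Finite :=
    ZSpan.setFinite_inter b Metric.isBounded_closedBall
  have hS : S.Finite := by
    apply (hB.prod hB).subset
    rintro ⟨u, v⟩ ⟨h1, h2⟩
    simp only at h1 h2
    refine ⟨⟨?_, ?_⟩, ⟨?_, ?_⟩⟩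
    · simp only [mem_closedBall_zero_iff]
      exact Real.le_sqrt_of_sq_le (by nlinarith [sq_nonneg ‖v‖])
    · rw [← h1]; exact Submodule.subset_span (by simp)
    · simp only [mem_closedBall_zero_iff]
      exact Real.le_sqrt_of_sq_le (by nlinarith [sq_nonneg ‖u‖])
    · rw [← h1]; exact Submodule.subset_span (by simp)
  obtain ⟨⟨u, v⟩, ⟨h1, h2⟩, h3⟩ := Set.exists_min_image S (fun w => ‖w.1‖^2 + ‖w.2‖^2) hS
    ⟨(b 0, b 1), h0, le_rfl⟩
  refine ⟨u, v, h1, fun u' v' h' => ?_⟩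
  by_cases hc : ‖u'‖^2 + ‖v'‖^2 ≤ R
  · exact h3 (u', v') ⟨h', hc⟩
  · simp only at h2; linarith

lemma span_add (u v : E2) (k : ℤ) : Submodule.span ℤ {u, v + k • u} = Submodule.span ℤ {u, v} := by
  apply le_antisymm <;> rw [Submodule.span_le] <;> rintro x (rfl | rfl)
  · exact Submodule.subset_span (by simp)
  · exact Submodule.mem_span_pair.mpr ⟨k, 1, by rw [one_smul, add_comm]⟩
  · exact Submodule.subset_span (by simp)
  · exact Submodule.mem_span_pair.mpr ⟨-k, 1, by rw [one_smul, neg_smul]; abel⟩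

lemma span_neg' (u v : E2) : Submodule.span ℤ {u, -v} = Submodule.span ℤ {u, v} := by
  apply le_antisymm <;> rw [Submodule.span_le] <;> rintro x (rfl | rfl)
  · exact Submodule.subset_span (by simp)
  · exact Submodule.neg_mem _ (Submodule.subset_span (by simp))
  · exact Submodule.subset_span (by simp)
  · rw [← neg_neg x]
    exact Submodule.neg_mem _ (Submodule.subset_span (by simp))

lemma exists_red_pair (b : Module.Basis (Fin 2) ℝ E2) :
    ∃ u v : E2, Submodule.span ℤ {u, v} = Submodule.span ℤ (Set.range b) ∧
      0 ≤ ⟪u, v⟫ ∧ 2 * ⟪u, v⟫ ≤ ‖u‖^2 ∧ ‖u‖^2 ≤ ‖v‖^2 := by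
  have step : ∃ u v : E2, Submodule.span ℤ {u, v} = Submodule.span ℤ (Set.range b) ∧
      ‖u‖^2 ≤ ‖v‖^2 ∧ 2 * |⟪u, v⟫| ≤ ‖u‖^2 := by
    obtain ⟨u, v, h, hmin⟩ := exists_min b
    have key : ∀ u v : E2, Submodule.span ℤ {u, v} = Submodule.span ℤ (Set.range b) →
        (∀ u' v' : E2, Submodule.span ℤ {u', v'} = Submodule.span ℤ (Set.range b) →
        ‖u‖^2 + ‖v‖^2 ≤ ‖u'‖^2 + ‖v'‖^2) → 2 * |⟪u, v⟫| ≤ ‖u‖^2 := by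
      intro u v h hmin
      have h1 := hmin u (v + (1:ℤ) • u) (by rw [span_add, h])
      have h2 := hmin u (v + (-1:ℤ) • u) (by rw [span_add, h])
      rw [one_smul, norm_add_sq_real, real_inner_comm] at h1
      rw [neg_smul, one_smul, ← sub_eq_add_neg, norm_sub_sq_real, real_inner_comm] at h2
      rcases abs_cases ⟪u, v⟫ with h | h <;> linarith
    rcases le_total (‖u‖^2) (‖v‖^2) with hl | hl
    · exact ⟨u, v, h, hl, key u v h hmin⟩
    · have h' : Submodule.span ℤ {v, u} = Submodule.span ℤ (Set.range b) := by
        rw [Set.pair_comm, h]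
      exact ⟨v, u, h', hl, key v u h' fun u' v' hh => by rw [add_comm]; exact hmin u' v' hh⟩
  obtain ⟨u, v, h, h1, h2⟩ := step
  rcases le_total 0 ⟪u, v⟫ with hl | hl
  · exact ⟨u, v, h, hl, by rwa [abs_of_nonneg hl] at h2, h1⟩
  · refine ⟨u, -v, by rw [span_neg', h], ?_, ?_, by rwa [norm_neg]⟩
    · rw [inner_neg_right]; linarith
    · rw [abs_of_nonpos hl] at h2
      rwa [inner_neg_right]

lemma exists_red (b : Module.Basis (Fin 2) ℝ E2) :
    ∃ b' : Module.Basis (Fin 2) ℝ E2, Submodule.span ℤ (Set.range b') = Submodule.span ℤ (Set.range b) ∧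
      Red (‖b' 0‖^2) ⟪b' 0, b' 1⟫ (‖b' 1‖^2) := by
  obtain ⟨u, v, h, h1, h2, h3⟩ := exists_red_pair b
  have hr : Set.range ![u, v] = {u, v} := by
    ext x; simp [eq_comm, or_comm]
  have hsp : ⊤ ≤ Submodule.span ℝ (Set.range ![u, v]) := by
    rw [← b.span_eq, Submodule.span_le, hr]
    have : Set.range b ⊆ Submodule.span ℤ {u, v} := by rw [h]; exact Submodule.subset_span
    exact this.trans (Submodule.span_subset_span ℤ ℝ _)
  have hli : LinearIndependent ℝ ![u, v] :=
    linearIndependent_of_top_le_span_of_card_eq_finrank hsp (by simp)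
  refine ⟨Module.Basis.mk hli hsp, ?_, ?_⟩
  · rw [Module.Basis.coe_mk, hr, h]
  · rw [Module.Basis.coe_mk]
    have := hli.ne_zero 0
    simp only [Matrix.cons_val_zero] at this
    exact ⟨pow_pos (norm_pos_iff.mpr this) 2, h1, h2, h3⟩

lemma card_eq (b : Module.Basis (Fin 2) ℝ E2) (k x : ℝ) (hk : 0 < k) :
    Nat.card {l : E2 // l ∈ (Submodule.span ℤ (Set.range b) : Set E2) ∧ k * ‖l‖^2 = x} =
      {z | qf (‖b 0‖^2) ⟪b 0, b 1⟫ (‖b 1‖^2) z = x / k}.ncard := by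
  let φ : ℤ × ℤ → E2 := fun z => z.1 • b 0 + z.2 • b 1
  have hφ : Function.Injective φ := by
    rintro ⟨x, y⟩ ⟨x', y'⟩ hh
    have h0 := congrArg (fun w => b.repr w 0) hh
    have h1 := congrArg (fun w => b.repr w 1) hh
    simp [φ, ← Int.cast_smul_eq_zsmul ℝ] at h0 h1
    simp [h0, h1]
  have hn : ∀ z, ‖φ z‖^2 = qf (‖b 0‖^2) ⟪b 0, b 1⟫ (‖b 1‖^2) z := by
    intro z
    simp only [φ, ← Int.cast_smul_eq_zsmul ℝ, norm_add_sq_real, norm_smul, inner_smul_left,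
      inner_smul_right, mul_pow, Real.norm_eq_abs, sq_abs, qf]
    simp
    ring
  have hr : Set.range b = {b 0, b 1} := by
    ext x; simp [Fin.exists_fin_two, eq_comm]
  rw [← Set.ncard_image_of_injective _ hφ, ← Nat.card_coe_set_eq]
  refine Nat.card_congr (Equiv.subtypeEquivRight fun l => ?_)
  rw [SetLike.mem_coe, hr, Submodule.mem_span_pair]
  constructor
  · rintro ⟨⟨m, n, rfl⟩, hx⟩
    refine ⟨(m, n), ?_, rfl⟩
    change _ = _
    rw [← hn, ← hx, mul_div_cancel_left₀ _ hk.ne']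
  · rintro ⟨z, hz, rfl⟩
    refine ⟨⟨z.1, z.2, rfl⟩, ?_⟩
    change _ = _ at hz
    rw [hn, hz, mul_div_cancel₀ _ hk.ne']

lemma isom (b b' : Module.Basis (Fin 2) ℝ E2) (h0 : ‖b 0‖^2 = ‖b' 0‖^2)
    (h1 : ⟪b 0, b 1⟫ = ⟪b' 0, b' 1⟫) (h2 : ‖b 1‖^2 = ‖b' 1‖^2) :
    ∃ I : E2 ≃ₗᵢ[ℝ] E2, ∀ v, v ∈ Submodule.span ℤ (Set.range b) ↔
      I v ∈ Submodule.span ℤ (Set.range b') := by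
  let f := b.equiv b' (Equiv.refl _)
  have hf : ∀ i, f (b i) = b' i := fun i => by simp [f]
  have hin : (innerₗ E2).compl₁₂ f.toLinearMap f.toLinearMap = innerₗ E2 := by
    apply LinearMap.BilinForm.ext_basis b
    intro i j
    have h1' : ⟪b 1, b 0⟫ = ⟪b' 1, b' 0⟫ := by rw [real_inner_comm, h1, real_inner_comm]
    fin_cases i <;> fin_cases j <;> simp [hf, h0, h1, h2, h1']
  have hin' : ∀ x y, ⟪f x, f y⟫ = ⟪x, y⟫ := fun x y => LinearMap.congr_fun₂ hin x y
  refine ⟨f.isometryOfInner hin', fun v => ?_⟩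
  rw [LinearEquiv.coe_isometryOfInner]
  have : Submodule.span ℤ (Set.range b') =
      (Submodule.span ℤ (Set.range b)).map (f.toLinearMap.restrictScalars ℤ) := by
    rw [Submodule.map_span, ← Set.range_comp]
    congr 2
    ext1 i
    exact (hf i).symm
  rw [this]
  constructor
  · intro h; exact ⟨v, h, rfl⟩
  · rintro ⟨w, hw, hh⟩
    have : w = v := f.injective hh
    rwa [← this]

/-- The 2-dimensional case: isospectrality of `F_{αβ,p}` on flat 2-tori implies isometry. -/
theorem stmt_12
    (L₁ L₂ : Submodule ℤ (EuclideanSpace ℝ (Fin 2)))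
    [DiscreteTopology L₁] [IsZLattice ℝ L₁] [DiscreteTopology L₂] [IsZLattice ℝ L₂]
    (α β : ℝ) (hα : 0 < α) (hβ : 0 < β) (p : ℕ) (hp : p = 1 ∨ p = 2)
    (h : torusSpec L₁ α β p = torusSpec L₂ α β p) :
    ∃ I : EuclideanSpace ℝ (Fin 2) ≃ₗᵢ[ℝ] EuclideanSpace ℝ (Fin 2),
      ⇑I '' (L₁ : Set (EuclideanSpace ℝ (Fin 2))) = (L₂ : Set (EuclideanSpace ℝ (Fin 2))) := by
  obtain ⟨c₁, hc₁, hL₁⟩ := dual_basis L₁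
  obtain ⟨c₂, hc₂, hL₂⟩ := dual_basis L₂
  obtain ⟨b₁, hb₁, r₁⟩ := exists_red c₁
  obtain ⟨b₂, hb₂, r₂⟩ := exists_red c₂
  rw [← hb₁] at hc₁
  rw [← hb₂] at hc₂
  have hα' : 0 < 4 * π ^ 2 * α := by positivity
  have hβ' : 0 < 4 * π ^ 2 * β := by positivity
  have hN : ∀ t, {z | qf (‖b₁ 0‖^2) ⟪b₁ 0, b₁ 1⟫ (‖b₁ 1‖^2) z = t}.ncard =
      {z | qf (‖b₂ 0‖^2) ⟪b₂ 0, b₂ 1⟫ (‖b₂ 1‖^2) z = t}.ncard := by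
    have H := fun x => congrFun h x
    simp only [torusSpec, hc₁, hc₂, card_eq _ _ _ hα', card_eq _ _ _ hβ'] at H
    rcases hp with rfl | rfl
    · simp at H
      exact peel' hα' hβ' (lt_min r₁.1 r₂.1) (fun s hs => small_eq r₁ r₂ s hs) H
    · intro t
      have := H (4 * π ^ 2 * α * t)
      rw [mul_div_cancel_left₀ _ hα'.ne'] at this
      simpa using this
  obtain ⟨e0, e1, e2⟩ := red_unique r₁ r₂ hN
  obtain ⟨I, hI⟩ := isom b₁ b₂ e0 e1 e2
  refine ⟨I, ?_⟩
  have key : ∀ w, w ∈ L₁ ↔ I w ∈ L₂ := by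
    intro w
    rw [hL₁, hL₂, hc₁, hc₂]
    constructor
    · intro hh v hv
      obtain ⟨v, rfl⟩ := I.surjective v
      rw [I.inner_map_map]
      exact hh v ((hI v).mpr hv)
    · intro hh v hv
      rw [← I.inner_map_map]
      exact hh _ ((hI v).mp hv)
  ext w
  constructor
  · rintro ⟨x, hx, rfl⟩
    exact (key x).mp hx
  · intro hw
    obtain ⟨x, rfl⟩ := I.surjective w
    exact ⟨x, (key x).mpr hw, rfl⟩
end

section
/- For every natural number n ≥ 4, all reals α, β > 0 and every natural number p with 1 ≤ p ≤ n, there exist full-rank lattices Λ₁ and Λ₂ in ℝⁿ such that Spec(Λ₁,α,β,p) = Spec(Λ₂,α,β,p) (as functions ℝ → ℕ) but no linear isometric equivalence I : ℝⁿ ≃ ℝⁿ satisfies I(Λ₁) = Λ₂ (i.e., the flat tori ℝⁿ/Λ₁ and ℝⁿ/Λ₂ are isospectral for F_{αβ,p} but not isometric). -/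
open Real
open scoped RealInnerProductSpace

/-- Congruence description of the Conway–Sloane lattice with sign `e`. -/
def csP (e a b c d : ℤ) : Prop :=
  12 ∣ (3 * e * a - b - c - d) ∧ 12 ∣ (a + 3 * e * b - c + d) ∧
  12 ∣ (a + b + 3 * e * c - d) ∧ 12 ∣ (a - b + c + 3 * e * d)

/-- Integrality conditions describing the dual lattice. -/
def csQ (e : ℤ) (a b c d : ℝ) : Prop :=
  (∃ m : ℤ, 3 * e * a - b - c - d = m) ∧ (∃ m : ℤ, a + 3 * e * b - c + d = m) ∧
  (∃ m : ℤ, a + b + 3 * e * c - d = m) ∧ (∃ m : ℤ, a - b + c + 3 * e * d = m)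

theorem csQ_iff (e : ℤ) (he : e = 1 ∨ e = -1) (a b c d : ℝ) :
    csQ e a b c d ↔ ∃ x y z w : ℤ, 12 * a = x ∧ 12 * b = y ∧ 12 * c = z ∧ 12 * d = w ∧
      csP e x y z w := by
  constructor
  · rintro ⟨⟨m0, h0⟩, ⟨m1, h1⟩, ⟨m2, h2⟩, ⟨m3, h3⟩⟩
    refine ⟨3 * e * m0 + m1 + m2 + m3, - m0 + 3 * e * m1 + m2 - m3,
      - m0 - m1 + 3 * e * m2 + m3, - m0 + m1 - m2 + 3 * e * m3, ?_, ?_, ?_, ?_, ?_⟩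
    · rcases he with rfl | rfl <;> push_cast at * <;> linarith
    · rcases he with rfl | rfl <;> push_cast at * <;> linarith
    · rcases he with rfl | rfl <;> push_cast at * <;> linarith
    · rcases he with rfl | rfl <;> push_cast at * <;> linarith
    · rcases he with rfl | rfl <;> unfold csP <;> omega
  · rintro ⟨x, y, z, w, ha, hb, hc, hd, ⟨m0, h0⟩, ⟨m1, h1⟩, ⟨m2, h2⟩, ⟨m3, h3⟩⟩
    have h0' := congrArg (Int.cast (R := ℝ)) h0
    have h1' := congrArg (Int.cast (R := ℝ)) h1
    have h2' := congrArg (Int.cast (R := ℝ)) h2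
    have h3' := congrArg (Int.cast (R := ℝ)) h3
    push_cast at h0' h1' h2' h3'
    rw [← ha, ← hb, ← hc, ← hd] at h0' h1' h2' h3'
    exact ⟨⟨m0, by linarith⟩, ⟨m1, by linarith⟩, ⟨m2, by linarith⟩, ⟨m3, by linarith⟩⟩

theorem csP_flip (e : ℤ) (he : e = 1 ∨ e = -1) (x y z w : ℤ) (h : csP e x y z w) :
    (3 ∣ x → csP (-e) (-x) y z w) ∧ (3 ∣ y → csP (-e) x (-y) z w) ∧
    (3 ∣ z → csP (-e) x y (-z) w) ∧ (3 ∣ w → csP (-e) x y z (-w)) ∧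
    (3 ∣ x ∨ 3 ∣ y ∨ 3 ∣ z ∨ 3 ∣ w) := by
  unfold csP at *
  obtain ⟨h0, h1, h2, h3⟩ := h
  have hy : y % 3 = 0 ∨ y % 3 = 1 ∨ y % 3 = 2 := by omega
  have hw : w % 3 = 0 ∨ w % 3 = 1 ∨ w % 3 = 2 := by omega
  rcases he with rfl | rfl <;> refine ⟨?_, ?_, ?_, ?_, ?_⟩
  case inl.refine_5 => rcases hy with hy | hy | hy <;> rcases hw with hw | hw | hw <;> omega
  case inr.refine_5 => rcases hy with hy | hy | hy <;> rcases hw with hw | hw | hw <;> omega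
  all_goals clear hy hw; omega

/-- `12 a` is an integer multiple of three. -/
def thr (a : ℝ) : Prop := ∃ k : ℤ, 12 * a = 3 * k

theorem thr_neg (a : ℝ) : thr (-a) ↔ thr a := by
  constructor
  · rintro ⟨k, hk⟩; exact ⟨-k, by push_cast; linarith⟩
  · rintro ⟨k, hk⟩; exact ⟨-k, by push_cast; linarith⟩

theorem thr_iff {a : ℝ} {x : ℤ} (h : 12 * a = x) : thr a ↔ 3 ∣ x := by
  constructor
  · rintro ⟨k, hk⟩
    exact ⟨k, by rw [h] at hk; exact_mod_cast hk⟩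
  · rintro ⟨k, rfl⟩
    exact ⟨k, by rw [h]; push_cast; ring⟩

theorem csQ_flip (e : ℤ) (he : e = 1 ∨ e = -1) (a b c d : ℝ) (h : csQ e a b c d) :
    (thr a → csQ (-e) (-a) b c d) ∧ (thr b → csQ (-e) a (-b) c d) ∧
    (thr c → csQ (-e) a b (-c) d) ∧ (thr d → csQ (-e) a b c (-d)) ∧
    (thr a ∨ thr b ∨ thr c ∨ thr d) := by
  have he' : -e = 1 ∨ -e = -1 := by omega
  rw [csQ_iff e he] at h
  obtain ⟨x, y, z, w, ha, hb, hc, hd, h⟩ := h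
  obtain ⟨f1, f2, f3, f4, f5⟩ := csP_flip e he x y z w h
  rw [thr_iff ha, thr_iff hb, thr_iff hc, thr_iff hd]
  simp only [csQ_iff (-e) he']
  refine ⟨fun k => ⟨-x, y, z, w, ?_, hb, hc, hd, f1 k⟩, fun k => ⟨x, -y, z, w, ha, ?_, hc, hd, f2 k⟩,
    fun k => ⟨x, y, -z, w, ha, hb, ?_, hd, f3 k⟩, fun k => ⟨x, y, z, -w, ha, hb, hc, ?_, f4 k⟩, f5⟩
  all_goals push_cast; linarith

/-- The Conway–Sloane lattice (sum an orthogonal lattice) with scaling `s`. -/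
def csL (m : ℕ) (s : Fin (4 + m) → ℝ) (e : ℤ) :
    Submodule ℤ (EuclideanSpace ℝ (Fin (4 + m))) where
  carrier := {x | ∃ z : Fin (4 + m) → ℤ, (∀ i, x i = s i * z i) ∧
    csP e (z (Fin.castAdd m 0)) (z (Fin.castAdd m 1)) (z (Fin.castAdd m 2)) (z (Fin.castAdd m 3))}
  zero_mem' := ⟨0, by simp, by simp [csP]⟩
  add_mem' := by
    rintro x y ⟨z, hz, p0, p1, p2, p3⟩ ⟨w, hw, q0, q1, q2, q3⟩
    refine ⟨z + w, fun i => ?_, ?_, ?_, ?_, ?_⟩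
    · simp [hz, hw, mul_add]
    · have h := dvd_add p0 q0; simp only [Pi.add_apply]; ring_nf at h ⊢; exact h
    · have h := dvd_add p1 q1; simp only [Pi.add_apply]; ring_nf at h ⊢; exact h
    · have h := dvd_add p2 q2; simp only [Pi.add_apply]; ring_nf at h ⊢; exact h
    · have h := dvd_add p3 q3; simp only [Pi.add_apply]; ring_nf at h ⊢; exact h
  smul_mem' := by
    rintro k x ⟨z, hz, p0, p1, p2, p3⟩
    refine ⟨k • z, fun i => ?_, ?_, ?_, ?_, ?_⟩
    · simp [hz]; ring
    · have h := dvd_mul_of_dvd_right p0 k; simp only [Pi.smul_apply, smul_eq_mul]; ring_nf at h ⊢; exact h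
    · have h := dvd_mul_of_dvd_right p1 k; simp only [Pi.smul_apply, smul_eq_mul]; ring_nf at h ⊢; exact h
    · have h := dvd_mul_of_dvd_right p2 k; simp only [Pi.smul_apply, smul_eq_mul]; ring_nf at h ⊢; exact h
    · have h := dvd_mul_of_dvd_right p3 k; simp only [Pi.smul_apply, smul_eq_mul]; ring_nf at h ⊢; exact h

theorem mem_csL {m : ℕ} {s : Fin (4 + m) → ℝ} {e : ℤ} {x : EuclideanSpace ℝ (Fin (4 + m))} :
    x ∈ csL m s e ↔ ∃ z : Fin (4 + m) → ℤ, (∀ i, x i = s i * z i) ∧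
    csP e (z (Fin.castAdd m 0)) (z (Fin.castAdd m 1)) (z (Fin.castAdd m 2))
      (z (Fin.castAdd m 3)) := Iff.rfl

theorem csL_discrete (m : ℕ) (s : Fin (4 + m) → ℝ) (hs : ∀ i, s i ≠ 0) (e : ℤ) :
    DiscreteTopology (csL m s e) := by
  let b := (EuclideanSpace.basisFun (Fin (4 + m)) ℝ).toBasis.isUnitSMul
    (w := s) (fun i => (hs i).isUnit)
  have hle : (csL m s e : Set (EuclideanSpace ℝ (Fin (4 + m)))) ⊆
      ((Submodule.span ℤ (Set.range b) : Submodule ℤ (EuclideanSpace ℝ (Fin (4 + m)))) :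
        Set (EuclideanSpace ℝ (Fin (4 + m)))) := by
    rintro x ⟨z, hz, -⟩
    rw [SetLike.mem_coe, b.mem_span_iff_repr_mem ℤ x]
    intro i
    refine ⟨z i, ?_⟩
    simp [b, Module.Basis.repr_isUnitSMul, hz, Units.smul_def, hs i]
  have hd : DiscreteTopology ((Submodule.span ℤ (Set.range b) :
      Submodule ℤ (EuclideanSpace ℝ (Fin (4 + m)))) : Set (EuclideanSpace ℝ (Fin (4 + m)))) :=
    inferInstanceAs (DiscreteTopology (Submodule.span ℤ (Set.range b)))
  exact DiscreteTopology.of_subset hd hle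

theorem csL_lattice (m : ℕ) (s : Fin (4 + m) → ℝ) (hs : ∀ i, s i ≠ 0) (e : ℤ) :
    @IsZLattice ℝ _ _ _ _ (csL m s e) (csL_discrete m s hs e) := by
  refine @IsZLattice.mk _ _ _ _ _ _ (csL_discrete m s hs e) ?_
  rw [eq_top_iff, ← (EuclideanSpace.basisFun (Fin (4 + m)) ℝ).toBasis.span_eq, Submodule.span_le]
  rintro _ ⟨i, rfl⟩
  have h1 : (EuclideanSpace.single i (s i * 12) : EuclideanSpace ℝ (Fin (4 + m))) ∈ csL m s e := by
    refine ⟨fun j => 12 * (Pi.single i 1 : Fin (4 + m) → ℤ) j, fun j => ?_, ?_⟩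
    · by_cases h : j = i
      · subst h; simp
      · simp [h]
    · generalize (Pi.single i 1 : Fin (4 + m) → ℤ) = q
      have key : ∀ a b c d : ℤ, csP e (12 * a) (12 * b) (12 * c) (12 * d) := fun a b c d =>
        ⟨⟨3 * e * a - b - c - d, by ring⟩, ⟨a + 3 * e * b - c + d, by ring⟩,
        ⟨a + b + 3 * e * c - d, by ring⟩, ⟨a - b + c + 3 * e * d, by ring⟩⟩
      exact key _ _ _ _
  have h2 := Submodule.smul_mem (Submodule.span ℝ (csL m s e : Set (EuclideanSpace ℝ (Fin (4 + m))))) ((s i * 12)⁻¹)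
    (Submodule.subset_span h1)
  suffices hb : (EuclideanSpace.basisFun (Fin (4 + m)) ℝ).toBasis i =
      (s i * 12)⁻¹ • (EuclideanSpace.single i (s i * 12) : EuclideanSpace ℝ (Fin (4 + m))) by
    rw [hb]; exact h2
  ext j
  have := hs i
  by_cases h : j = i
  · subst h; simp; field_simp
  · simp [h]

theorem cs_inner_sum {m : ℕ} (s : Fin (4 + m) → ℝ) (v w : EuclideanSpace ℝ (Fin (4 + m)))
    (z : Fin (4 + m) → ℤ) (hw : ∀ i, w i = s i * z i) :
    ⟪v, w⟫ = ∑ i, (s i * v i) * z i := by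
  rw [PiLp.inner_apply]
  refine Finset.sum_congr rfl fun i _ => ?_
  simp [hw]; ring

theorem mem_dual {m : ℕ} (s : Fin (4 + m) → ℝ) (e : ℤ) (he : e = 1 ∨ e = -1)
    (v : EuclideanSpace ℝ (Fin (4 + m))) :
    v ∈ dualLattice (csL m s e) ↔
      csQ e (s (Fin.castAdd m 0) * v (Fin.castAdd m 0)) (s (Fin.castAdd m 1) * v (Fin.castAdd m 1))
        (s (Fin.castAdd m 2) * v (Fin.castAdd m 2)) (s (Fin.castAdd m 3) * v (Fin.castAdd m 3)) ∧
      ∀ i : Fin m, ∃ k : ℤ, s (Fin.natAdd 4 i) * v (Fin.natAdd 4 i) = k := by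
  constructor
  · intro h
    have key : ∀ (f : Fin 4 → ℤ) (g : Fin m → ℤ), csP e (f 0) (f 1) (f 2) (f 3) →
        ∃ k : ℤ, ∑ i, (s i * v i) * (Fin.append f g i : ℤ) = (k : ℝ) := by
      intro f g hf
      obtain ⟨k, hk⟩ := h (WithLp.toLp 2 fun i => s i * (Fin.append f g i : ℤ))
        ⟨Fin.append f g, fun i => rfl, by simpa only [Fin.append_left] using hf⟩
      exact ⟨k, by rw [← hk, cs_inner_sum s _ _ _ (fun i => rfl)]⟩
    simp only [Fin.sum_univ_add, Fin.append_left, Fin.append_right, Fin.sum_univ_four] at key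
    refine ⟨⟨?_, ?_, ?_, ?_⟩, fun i => ?_⟩
    · obtain ⟨k, hk⟩ := key ![3 * e, -1, -1, -1] 0
        (by rcases he with rfl | rfl <;> simp [csP])
      refine ⟨k, ?_⟩
      rw [← hk]; simp; ring
    · obtain ⟨k, hk⟩ := key ![1, 3 * e, -1, 1] 0
        (by rcases he with rfl | rfl <;> simp [csP])
      refine ⟨k, ?_⟩
      rw [← hk]; simp; ring
    · obtain ⟨k, hk⟩ := key ![1, 1, 3 * e, -1] 0
        (by rcases he with rfl | rfl <;> simp [csP])
      refine ⟨k, ?_⟩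
      rw [← hk]; simp; ring
    · obtain ⟨k, hk⟩ := key ![1, -1, 1, 3 * e] 0
        (by rcases he with rfl | rfl <;> simp [csP])
      refine ⟨k, ?_⟩
      rw [← hk]; simp; ring
    · obtain ⟨k, hk⟩ := key 0 (Pi.single i 1) (by simp [csP])
      refine ⟨k, ?_⟩
      rw [← hk]
      simp [Pi.single_apply]
  · rintro ⟨⟨⟨m0, h0⟩, ⟨m1, h1⟩, ⟨m2, h2⟩, ⟨m3, h3⟩⟩, hr⟩ w ⟨z, hz, ⟨k0, g0⟩, ⟨k1, g1⟩, ⟨k2, g2⟩, ⟨k3, g3⟩⟩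
    choose r hr using hr
    rw [cs_inner_sum s v w z hz, Fin.sum_univ_add, Fin.sum_univ_four]
    refine ⟨m0 * k0 + m1 * k1 + m2 * k2 + m3 * k3 + ∑ i, r i * z (Fin.natAdd 4 i), ?_⟩
    have g0' := congrArg (Int.cast (R := ℝ)) g0
    have g1' := congrArg (Int.cast (R := ℝ)) g1
    have g2' := congrArg (Int.cast (R := ℝ)) g2
    have g3' := congrArg (Int.cast (R := ℝ)) g3
    push_cast at g0' g1' g2' g3' ⊢
    have hs2 : ∑ i : Fin m, (s (Fin.natAdd 4 i) * v (Fin.natAdd 4 i)) * (z (Fin.natAdd 4 i) : ℝ)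
        = ∑ i : Fin m, (r i : ℝ) * (z (Fin.natAdd 4 i) : ℝ) :=
      Finset.sum_congr rfl fun i _ => by rw [hr]
    rw [hs2]
    congr 1
    rw [← h0, ← h1, ← h2, ← h3]
    have e0 := eq_div_of_mul_eq (by norm_num : (12 : ℝ) ≠ 0) ((mul_comm _ _).trans g0'.symm)
    have e1 := eq_div_of_mul_eq (by norm_num : (12 : ℝ) ≠ 0) ((mul_comm _ _).trans g1'.symm)
    have e2 := eq_div_of_mul_eq (by norm_num : (12 : ℝ) ≠ 0) ((mul_comm _ _).trans g2'.symm)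
    have e3 := eq_div_of_mul_eq (by norm_num : (12 : ℝ) ≠ 0) ((mul_comm _ _).trans g3'.symm)
    rw [e0, e1, e2, e3]
    rcases he with rfl | rfl <;> push_cast <;> ring

open Classical in
/-- Index of the coordinate to be flipped. -/
noncomputable def flipIdx {m : ℕ} (s : Fin (4 + m) → ℝ) (v : EuclideanSpace ℝ (Fin (4 + m))) :
    Fin 4 :=
  if thr (s (Fin.castAdd m 0) * v (Fin.castAdd m 0)) then 0
  else if thr (s (Fin.castAdd m 1) * v (Fin.castAdd m 1)) then 1
  else if thr (s (Fin.castAdd m 2) * v (Fin.castAdd m 2)) then 2 else 3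

theorem flipIdx_spec {m : ℕ} (s : Fin (4 + m) → ℝ) (v : EuclideanSpace ℝ (Fin (4 + m))) :
    (flipIdx s v = 0 ∧ thr (s (Fin.castAdd m 0) * v (Fin.castAdd m 0))) ∨
    (flipIdx s v = 1 ∧ ¬ thr (s (Fin.castAdd m 0) * v (Fin.castAdd m 0)) ∧
      thr (s (Fin.castAdd m 1) * v (Fin.castAdd m 1))) ∨
    (flipIdx s v = 2 ∧ ¬ thr (s (Fin.castAdd m 0) * v (Fin.castAdd m 0)) ∧
      ¬ thr (s (Fin.castAdd m 1) * v (Fin.castAdd m 1)) ∧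
      thr (s (Fin.castAdd m 2) * v (Fin.castAdd m 2))) ∨
    (flipIdx s v = 3 ∧ ¬ thr (s (Fin.castAdd m 0) * v (Fin.castAdd m 0)) ∧
      ¬ thr (s (Fin.castAdd m 1) * v (Fin.castAdd m 1)) ∧
      ¬ thr (s (Fin.castAdd m 2) * v (Fin.castAdd m 2))) := by
  unfold flipIdx
  split_ifs with h0 h1 h2 <;> simp [*]

/-- Flip the sign of coordinate `j`. -/
noncomputable def flipAt {n : ℕ} (j : Fin n) (v : EuclideanSpace ℝ (Fin n)) :
    EuclideanSpace ℝ (Fin n) := WithLp.toLp 2 fun i => if i = j then - v i else v i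

theorem flipAt_apply {n : ℕ} (j : Fin n) (v : EuclideanSpace ℝ (Fin n)) (i : Fin n) :
    flipAt j v i = if i = j then - v i else v i := rfl

theorem flipAt_flipAt {n : ℕ} (j : Fin n) (v : EuclideanSpace ℝ (Fin n)) :
    flipAt j (flipAt j v) = v := by
  ext i
  by_cases h : i = j <;> simp [flipAt_apply, h]

theorem norm_flipAt {n : ℕ} (j : Fin n) (v : EuclideanSpace ℝ (Fin n)) :
    ‖flipAt j v‖ ^ 2 = ‖v‖ ^ 2 := by
  rw [EuclideanSpace.norm_sq_eq, EuclideanSpace.norm_sq_eq]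
  refine Finset.sum_congr rfl fun i _ => ?_
  by_cases h : i = j <;> simp [flipAt_apply, h]

theorem flipIdx_flipAt {m : ℕ} (s : Fin (4 + m) → ℝ) (v : EuclideanSpace ℝ (Fin (4 + m)))
    (j : Fin (4 + m)) : flipIdx s (flipAt j v) = flipIdx s v := by
  have h : ∀ i, thr (s i * flipAt j v i) ↔ thr (s i * v i) := by
    intro i
    by_cases h : i = j
    · simp only [flipAt_apply, h, if_true, mul_neg, thr_neg]
    · simp [flipAt_apply, h]
  have h0 := h (Fin.castAdd m 0)
  have h1 := h (Fin.castAdd m 1)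
  have h2 := h (Fin.castAdd m 2)
  rcases flipIdx_spec s v with a | a | a | a <;>
    rcases flipIdx_spec s (flipAt j v) with b | b | b | b <;>
    first
    | exact b.1.trans a.1.symm
    | (exfalso; tauto)

theorem flip_mem {m : ℕ} (s : Fin (4 + m) → ℝ) (e : ℤ) (he : e = 1 ∨ e = -1)
    (v : EuclideanSpace ℝ (Fin (4 + m))) (h : v ∈ dualLattice (csL m s e)) :
    flipAt (Fin.castAdd m (flipIdx s v)) v ∈ dualLattice (csL m s (-e)) := by
  rw [mem_dual s e he] at h
  rw [mem_dual s (-e) (by omega)]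
  obtain ⟨h, hr⟩ := h
  obtain ⟨f0, f1, f2, f3, f4⟩ := csQ_flip e he _ _ _ _ h
  constructor
  · simp only [flipAt_apply, Fin.castAdd_inj]
    rcases flipIdx_spec s v with a | a | a | a <;> rw [a.1]
    · simpa using f0 a.2
    · simpa using f1 a.2.2
    · simpa using f2 a.2.2.2
    · simpa using f3 (by tauto)
  · intro i
    have : Fin.natAdd 4 i ≠ Fin.castAdd m (flipIdx s v) := by
      intro h
      have := congrArg Fin.val h
      simp at this
      omega
    simpa [flipAt_apply, this] using hr i

theorem card_eq_s13 {m : ℕ} (s : Fin (4 + m) → ℝ) (γ x : ℝ) :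
    Nat.card {l : EuclideanSpace ℝ (Fin (4 + m)) //
        l ∈ dualLattice (csL m s 1) ∧ 4 * π ^ 2 * γ * ‖l‖ ^ 2 = x} =
    Nat.card {l : EuclideanSpace ℝ (Fin (4 + m)) //
        l ∈ dualLattice (csL m s (-1)) ∧ 4 * π ^ 2 * γ * ‖l‖ ^ 2 = x} := by
  refine Nat.card_congr
    { toFun := fun l => ⟨flipAt (Fin.castAdd m (flipIdx s l.1)) l.1,
        flip_mem s 1 (Or.inl rfl) l.1 l.2.1, by rw [norm_flipAt]; exact l.2.2⟩
      invFun := fun l => ⟨flipAt (Fin.castAdd m (flipIdx s l.1)) l.1,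
        by simpa using flip_mem s (-1) (Or.inr rfl) l.1 l.2.1, by rw [norm_flipAt]; exact l.2.2⟩
      left_inv := ?_
      right_inv := ?_ }
  · intro l
    apply Subtype.ext
    simp only [flipIdx_flipAt, flipAt_flipAt]
  · intro l
    apply Subtype.ext
    simp only [flipIdx_flipAt, flipAt_flipAt]

theorem coeff_eq {n : ℕ} (u : ℝ) (hu : Transcendental ℤ u) (a b : Fin n → ℤ)
    (h : ∑ i : Fin n, (u ^ (i : ℕ)) ^ 2 * (a i : ℝ) = ∑ i : Fin n, (u ^ (i : ℕ)) ^ 2 * (b i : ℝ)) (i : Fin n) :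
    a i = b i := by
  let q : Polynomial ℤ := ∑ i : Fin n, Polynomial.monomial ((i : ℕ) * 2) (a i - b i)
  have hq : q = 0 := by
    by_contra hne
    apply hu
    refine ⟨q, hne, ?_⟩
    simp only [q, map_sum, Polynomial.aeval_monomial]
    have : ∑ i : Fin n, (u ^ (i : ℕ)) ^ 2 * (a i : ℝ) - ∑ i : Fin n, (u ^ (i : ℕ)) ^ 2 * (b i : ℝ) = 0 :=
      sub_eq_zero.2 h
    rw [← Finset.sum_sub_distrib] at this
    rw [← this]
    refine Finset.sum_congr rfl fun i _ => ?_
    simp [pow_mul]; ring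
  have h2 := congrArg (fun r => Polynomial.coeff r ((i : ℕ) * 2)) hq
  simp only [q, Polynomial.finsetSum_coeff, Polynomial.coeff_monomial, Polynomial.coeff_zero] at h2
  rw [Finset.sum_eq_single i] at h2
  · simp at h2; omega
  · intro j _ hj
    rw [if_neg]
    intro h
    exact hj (Fin.ext (by omega))
  · simp

theorem norm_coords {n : ℕ} (u : ℝ) (hu : Transcendental ℤ u) (v w : EuclideanSpace ℝ (Fin n))
    (a b : Fin n → ℤ) (hv : ∀ i, v i = u ^ (i : ℕ) * a i) (hw : ∀ i, w i = u ^ (i : ℕ) * b i)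
    (h : ‖v‖ = ‖w‖) (i : Fin n) : a i ^ 2 = b i ^ 2 := by
  refine coeff_eq u hu (fun i => a i ^ 2) (fun i => b i ^ 2) ?_ i
  have h2 : ‖v‖ ^ 2 = ‖w‖ ^ 2 := by rw [h]
  rw [EuclideanSpace.norm_sq_eq, EuclideanSpace.norm_sq_eq] at h2
  simp only [hv, hw, Real.norm_eq_abs, sq_abs, mul_pow] at h2
  push_cast
  exact h2

theorem int_contra (a b c d x y z w : ℤ) (h1 : csP (-1) a b c d) (h2 : csP (-1) x y z w)
    (ha : a ^ 2 = 3 ^ 2) (hb : b ^ 2 = 1 ^ 2) (hc : c ^ 2 = 1 ^ 2) (hd : d ^ 2 = 1 ^ 2)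
    (hx : x ^ 2 = 1 ^ 2) (hy : y ^ 2 = 3 ^ 2) (hz : z ^ 2 = 1 ^ 2) (hw : w ^ 2 = 1 ^ 2)
    (h0 : a * x = 3) (h3 : c * z = 1) : False := by
  unfold csP at h1 h2
  rw [sq_eq_sq_iff_eq_or_eq_neg] at ha hb hc hd hx hy hz hw
  have e1 : (a = -3 ∧ c = -1) ∨ (a = 3 ∧ c = 1) := by
    clear hx hy hz hw h2 h0 h3
    rcases ha with rfl | rfl <;> rcases hb with rfl | rfl <;> rcases hc with rfl | rfl <;>
      rcases hd with rfl | rfl <;> revert h1 <;> decide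
  have e2 : (x = 1 ∧ z = -1) ∨ (x = -1 ∧ z = 1) := by
    clear ha hb hc hd h1 h0 h3 e1
    rcases hx with rfl | rfl <;> rcases hy with rfl | rfl <;> rcases hz with rfl | rfl <;>
      rcases hw with rfl | rfl <;> revert h2 <;> decide
  clear ha hb hc hd h1 hx hy hz hw h2
  rcases e1 with ⟨rfl, rfl⟩ | ⟨rfl, rfl⟩ <;> rcases e2 with ⟨rfl, rfl⟩ | ⟨rfl, rfl⟩ <;> omega

theorem not_isom (m : ℕ) (u : ℝ) (hu : Transcendental ℤ u)
    (I : EuclideanSpace ℝ (Fin (4 + m)) ≃ₗᵢ[ℝ] EuclideanSpace ℝ (Fin (4 + m)))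
    (hI : ⇑I '' (csL m (fun i => u ^ (i : ℕ)) 1 : Set (EuclideanSpace ℝ (Fin (4 + m)))) =
      (csL m (fun i => u ^ (i : ℕ)) (-1) : Set (EuclideanSpace ℝ (Fin (4 + m))))) : False := by
  let f : Fin (4 + m) → ℤ := Fin.append ![3, -1, -1, -1] 0
  let g : Fin (4 + m) → ℤ := Fin.append ![1, 3, -1, 1] 0
  let x : EuclideanSpace ℝ (Fin (4 + m)) := WithLp.toLp 2 fun i => u ^ (i : ℕ) * (f i : ℝ)
  let y : EuclideanSpace ℝ (Fin (4 + m)) := WithLp.toLp 2 fun i => u ^ (i : ℕ) * (g i : ℝ)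
  have hx : x ∈ csL m (fun i => u ^ (i : ℕ)) 1 :=
    ⟨f, fun i => rfl, by simp only [f, Fin.append_left]; simp [csP]⟩
  have hy : y ∈ csL m (fun i => u ^ (i : ℕ)) 1 :=
    ⟨g, fun i => rfl, by simp only [g, Fin.append_left]; simp [csP]⟩
  have hx' : I x ∈ csL m (fun i => u ^ (i : ℕ)) (-1) := by
    rw [← SetLike.mem_coe, ← hI]; exact ⟨x, hx, rfl⟩
  have hy' : I y ∈ csL m (fun i => u ^ (i : ℕ)) (-1) := by
    rw [← SetLike.mem_coe, ← hI]; exact ⟨y, hy, rfl⟩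
  obtain ⟨a, ha, pa⟩ := hx'
  obtain ⟨b, hb, pb⟩ := hy'
  have na := norm_coords u hu (I x) x a f ha (fun i => rfl) (I.norm_map x)
  have nb := norm_coords u hu (I y) y b g hb (fun i => rfl) (I.norm_map y)
  have nab := norm_coords u hu (I (x + y)) (x + y) (a + b) (f + g)
    (fun i => by simp [ha, hb, mul_add]) (fun i => by simp [x, y, mul_add]) (I.norm_map (x + y))
  have prod : ∀ i, a i * b i = f i * g i := by
    intro i
    have h1 := na i
    have h2 := nb i
    have h3 := nab i
    simp only [Pi.add_apply] at h3
    nlinarith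
  have q := fun j => na (Fin.castAdd m j)
  have r := fun j => nb (Fin.castAdd m j)
  have t := fun j => prod (Fin.castAdd m j)
  simp only [f, g, Fin.append_left] at q r t
  refine int_contra _ _ _ _ _ _ _ _ pa pb ?_ ?_ ?_ ?_ ?_ ?_ ?_ ?_ ?_ ?_
  · simpa using q 0
  · simpa using q 1
  · simpa using q 2
  · simpa using q 3
  · simpa using r 0
  · simpa using r 1
  · simpa using r 2
  · simpa using r 3
  · simpa using t 0
  · simpa using t 2

/-- From dimension 4 onward there are non-isometric flat tori that are isospectral for
`F_{αβ,p}`. -/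
theorem stmt_13 (n : ℕ) (hn : 4 ≤ n) (α β : ℝ) (hα : 0 < α) (hβ : 0 < β)
    (p : ℕ) (hp : 1 ≤ p) (hpn : p ≤ n) :
    ∃ (L₁ L₂ : Submodule ℤ (EuclideanSpace ℝ (Fin n)))
      (h₁ : DiscreteTopology L₁) (h₂ : DiscreteTopology L₂),
      @IsZLattice ℝ _ _ _ _ L₁ h₁ ∧ @IsZLattice ℝ _ _ _ _ L₂ h₂ ∧
      torusSpec L₁ α β p = torusSpec L₂ α β p ∧
      ¬ ∃ I : EuclideanSpace ℝ (Fin n) ≃ₗᵢ[ℝ] EuclideanSpace ℝ (Fin n),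
          ⇑I '' (L₁ : Set (EuclideanSpace ℝ (Fin n))) =
            (L₂ : Set (EuclideanSpace ℝ (Fin n))) := by
  obtain ⟨m, rfl⟩ := Nat.exists_eq_add_of_le hn
  have hu : Transcendental ℤ (liouvilleNumber 2) := transcendental_liouvilleNumber (m := 2) le_rfl
  have hu0 : liouvilleNumber 2 ≠ 0 := by
    intro h
    rw [h] at hu
    exact hu isAlgebraic_zero
  have hs : ∀ i : Fin (4 + m), (liouvilleNumber 2) ^ (i : ℕ) ≠ 0 := fun i => pow_ne_zero _ hu0
  refine ⟨csL m (fun i => (liouvilleNumber 2) ^ (i : ℕ)) 1,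
    csL m (fun i => (liouvilleNumber 2) ^ (i : ℕ)) (-1),
    csL_discrete _ _ hs _, csL_discrete _ _ hs _, csL_lattice _ _ hs _, csL_lattice _ _ hs _, ?_, ?_⟩
  · funext x
    simp only [torusSpec, card_eq_s13]
  · rintro ⟨I, hI⟩
    exact not_isom m _ hu I hI
end

section
/- Let n ≥ 2 and let p be a natural number with 1 ≤ p ≤ n−1, and let α, β, r, r' > 0 be reals. Then S(n,p,α,β,r) = S(n,p,α,β,r') (as functions ℝ → ℕ) if and only if r = r'. -/
open scoped Classical

/-- The spectrum, with multiplicities, of the generalized Hodge-Laplace operator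
`F_{αβ} = α dδ + β δd` on `p`-forms on the round `n`-sphere of radius `r`
(Theorem 4.12 and Proposition 4.15): the eigenvalue `λ(k) = (β/r²)(k+p)(k+n-p-1)` for
`k ≥ 1` occurs with multiplicity `dim V_k^p` and the eigenvalue
`μ(k) = (α/r²)(k+p)(k+n-p+1)` for `k ≥ 0` with multiplicity `dim W_k^p`. -/
noncomputable def sphereSpec (n p : ℕ) (α β r : ℝ) : ℝ → ℕ := fun x =>
  (∑' k : ℕ,
      if 1 ≤ k ∧ (β / r ^ 2) * (((k + p) * (k + n - p - 1) : ℕ) : ℝ) = x then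
        ((n + k - 1).factorial * (n + 2 * k - 1)) /
          (p.factorial * (k - 1).factorial * (n - p - 1).factorial * (n + k - p - 1) * (k + p))
      else 0) +
  (∑' k : ℕ,
      if (α / r ^ 2) * (((k + p) * (k + n - p + 1) : ℕ) : ℝ) = x then
        ((n + k).factorial * (n + 2 * k + 1)) /
          ((p - 1).factorial * k.factorial * (n - p).factorial * (n + k - p + 1) * (k + p))
      else 0)

theorem spec_lower (n p : ℕ) (hn : 2 ≤ n) (hp : 1 ≤ p) (hpn : p ≤ n - 1)
    (α β r x : ℝ) (hα : 0 < α) (hβ : 0 < β) (hr : 0 < r)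
    (h : sphereSpec n p α β r x ≠ 0) :
    min (β * (((1 + p) * (n - p) : ℕ) : ℝ)) (α * ((p * (n - p + 1) : ℕ) : ℝ)) / r ^ 2 ≤ x := by
  have hr2 : 0 < r ^ 2 := by positivity
  by_contra hx
  apply h
  unfold sphereSpec
  have h1 : ∀ k : ℕ, ¬ (1 ≤ k ∧ (β / r ^ 2) * (((k + p) * (k + n - p - 1) : ℕ) : ℝ) = x) := by
    rintro k ⟨hk, rfl⟩
    apply hx
    have : (1 + p) * (n - p) ≤ (k + p) * (k + n - p - 1) :=
      Nat.mul_le_mul (by omega) (by omega)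
    have h2 : (((1 + p) * (n - p) : ℕ) : ℝ) ≤ (((k + p) * (k + n - p - 1) : ℕ) : ℝ) := by
      exact_mod_cast this
    rw [div_mul_eq_mul_div]
    exact div_le_div_of_nonneg_right
      ((min_le_left _ _).trans (mul_le_mul_of_nonneg_left h2 hβ.le)) hr2.le
  have h2 : ∀ k : ℕ, ¬ ((α / r ^ 2) * (((k + p) * (k + n - p + 1) : ℕ) : ℝ) = x) := by
    rintro k rfl
    apply hx
    have : p * (n - p + 1) ≤ (k + p) * (k + n - p + 1) :=
      Nat.mul_le_mul (by omega) (by omega)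
    have h2 : ((p * (n - p + 1) : ℕ) : ℝ) ≤ (((k + p) * (k + n - p + 1) : ℕ) : ℝ) := by
      exact_mod_cast this
    rw [div_mul_eq_mul_div]
    exact div_le_div_of_nonneg_right
      ((min_le_right _ _).trans (mul_le_mul_of_nonneg_left h2 hα.le)) hr2.le
  simp only [h1, h2, if_false, tsum_zero, add_zero]

theorem spec_ne_left (n p : ℕ) (hn : 2 ≤ n) (hpn : p ≤ n - 1)
    (α β r : ℝ) (hβ : 0 < β) (hr : 0 < r) :
    sphereSpec n p α β r (β * (((1 + p) * (n - p) : ℕ) : ℝ) / r ^ 2) ≠ 0 := by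
  have hr2 : 0 < r ^ 2 := by positivity
  unfold sphereSpec
  intro h
  have h1 := (Nat.add_eq_zero_iff.mp h).1
  rw [tsum_eq_single 1] at h1
  · rw [if_pos] at h1
    · revert h1
      apply Nat.ne_of_gt
      obtain ⟨m, rfl⟩ : ∃ m, n = p + m + 1 := ⟨n - p - 1, by omega⟩
      have e1 : p + m + 1 + 1 - 1 = p + m + 1 := by omega
      have e2 : p + m + 1 + 2 * 1 - 1 = p + m + 2 := by omega
      have e3 : p + m + 1 - p - 1 = m := by omega
      have e4 : p + m + 1 + 1 - p - 1 = m + 1 := by omega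
      rw [e1, e2, e3, e4]
      apply Nat.div_pos
      · have := Nat.le_of_dvd (Nat.factorial_pos _)
          (Nat.factorial_mul_factorial_dvd_factorial_add (p + 1) (m + 1))
        have e : p + 1 + (m + 1) = (p + m + 1) + 1 := by omega
        rw [e, Nat.factorial_succ (p + m + 1), Nat.factorial_succ p, Nat.factorial_succ m] at this
        simp only [Nat.sub_self, Nat.factorial_zero]
        nlinarith
      · positivity
    · refine ⟨le_rfl, ?_⟩
      have : 1 + n - p - 1 = n - p := by omega
      rw [this, div_mul_eq_mul_div]
  · intro k hk
    rw [if_neg]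
    rintro ⟨hk1, hk2⟩
    rw [div_mul_eq_mul_div, div_left_inj' hr2.ne', mul_right_inj' hβ.ne'] at hk2
    have h3 : (k + p) * (k + n - p - 1) = (1 + p) * (n - p) := by exact_mod_cast hk2
    have : (1 + p) * (n - p) < (k + p) * (k + n - p - 1) :=
      Nat.mul_lt_mul_of_lt_of_le (by omega) (by omega) (by omega)
    omega

theorem spec_ne_right (n p : ℕ) (hn : 2 ≤ n) (hp : 1 ≤ p) (hpn : p ≤ n - 1)
    (α β r : ℝ) (hα : 0 < α) (hr : 0 < r) :
    sphereSpec n p α β r (α * ((p * (n - p + 1) : ℕ) : ℝ) / r ^ 2) ≠ 0 := by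
  have hr2 : 0 < r ^ 2 := by positivity
  unfold sphereSpec
  intro h
  have h1 := (Nat.add_eq_zero_iff.mp h).2
  rw [tsum_eq_single 0] at h1
  · rw [if_pos] at h1
    · revert h1
      apply Nat.ne_of_gt
      obtain ⟨q, rfl⟩ : ∃ q, p = q + 1 := ⟨p - 1, by omega⟩
      obtain ⟨m, rfl⟩ : ∃ m, n = q + 1 + m := ⟨n - (q + 1), by omega⟩
      have e1 : q + 1 + m + 0 - (q + 1) = m := by omega
      have e2 : q + 1 + m - (q + 1) = m := by omega
      rw [e1, e2]
      apply Nat.div_pos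
      · have := Nat.le_of_dvd (Nat.factorial_pos _)
          (Nat.factorial_mul_factorial_dvd_factorial_add (q + 1) (m + 1))
        have e : q + 1 + (m + 1) = (q + 1 + m) + 1 := by omega
        rw [e, Nat.factorial_succ (q + 1 + m), Nat.factorial_succ q, Nat.factorial_succ m] at this
        simp only [Nat.add_sub_cancel, Nat.factorial_zero, add_zero, mul_zero]
        nlinarith
      · simp only [Nat.add_sub_cancel]
        positivity
    · have : 0 + n - p + 1 = n - p + 1 := by omega
      rw [this, zero_add, div_mul_eq_mul_div]
  · intro k hk
    rw [if_neg]
    intro hk2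
    rw [div_mul_eq_mul_div, div_left_inj' hr2.ne', mul_right_inj' hα.ne'] at hk2
    have h3 : (k + p) * (k + n - p + 1) = p * (n - p + 1) := by exact_mod_cast hk2
    have : p * (n - p + 1) < (k + p) * (k + n - p + 1) :=
      Nat.mul_lt_mul_of_lt_of_le (by omega) (by omega) (by omega)
    omega

theorem spec_le (n p : ℕ) (hn : 2 ≤ n) (hp : 1 ≤ p) (hpn : p ≤ n - 1)
    (α β r r' : ℝ) (hα : 0 < α) (hβ : 0 < β) (hr : 0 < r) (hr' : 0 < r')
    (h : sphereSpec n p α β r = sphereSpec n p α β r') : r ≤ r' := by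
  have hm : 0 < min (β * (((1 + p) * (n - p) : ℕ) : ℝ)) (α * ((p * (n - p + 1) : ℕ) : ℝ)) := by
    have h1 : 0 < (1 + p) * (n - p) := Nat.mul_pos (by omega) (by omega)
    have h2 : 0 < p * (n - p + 1) := Nat.mul_pos (by omega) (by omega)
    exact lt_min (mul_pos hβ (by exact_mod_cast h1)) (mul_pos hα (by exact_mod_cast h2))
  have hne : sphereSpec n p α β r
      (min (β * (((1 + p) * (n - p) : ℕ) : ℝ)) (α * ((p * (n - p + 1) : ℕ) : ℝ)) / r ^ 2) ≠ 0 := by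
    rcases min_choice (β * (((1 + p) * (n - p) : ℕ) : ℝ)) (α * ((p * (n - p + 1) : ℕ) : ℝ))
      with e | e
    · rw [e]; exact spec_ne_left n p hn hpn α β r hβ hr
    · rw [e]; exact spec_ne_right n p hn hp hpn α β r hα hr
  rw [h] at hne
  have := spec_lower n p hn hp hpn α β r' _ hα hβ hr' hne
  rw [div_le_div_iff_of_pos_left hm (by positivity) (by positivity)] at this
  exact (pow_le_pow_iff_left₀ hr.le hr'.le two_ne_zero).mp this

/-- Proposition 4.19: `F_{αβ,p}` on spheres of radii `r` and `r'` is isospectral iff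
`r = r'`. -/
theorem stmt_14 (n p : ℕ) (hn : 2 ≤ n) (hp : 1 ≤ p) (hpn : p ≤ n - 1)
    (α β r r' : ℝ) (hα : 0 < α) (hβ : 0 < β) (hr : 0 < r) (hr' : 0 < r') :
    sphereSpec n p α β r = sphereSpec n p α β r' ↔ r = r' := by
  constructor
  · intro h
    exact le_antisymm (spec_le n p hn hp hpn α β r r' hα hβ hr hr' h)
      (spec_le n p hn hp hpn α β r' r hα hβ hr' hr h.symm)
  · rintro rfl
    rfl
end

section
/- Let n ≥ 2 and let p be a natural number with 1 ≤ p ≤ n−1 and n ≠ 2p, and let α, α', β, β', r > 0 be reals. Then S(n,p,α,β,r) = S(n,p,α',β',r) (as functions ℝ → ℕ) if and only if α = α' and β = β'. -/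
open scoped Classical

theorem aux_inj (F : ℝ → ℝ → ℕ) (A : ℝ) (D : ℕ) (hA : 0 < A) (hD : 0 < D)
    (h0 : ∀ b x, 0 < b → x < b * A → F b x = 0) (h1 : ∀ b, 0 < b → F b (b * A) = D)
    (b b' : ℝ) (hb : 0 < b) (hb' : 0 < b') (h : ∀ x, F b x = F b' x) : b = b' := by
  rcases lt_trichotomy b b' with hlt | heq | hlt
  · have e1 := h (b * A)
    rw [h1 b hb, h0 b' _ hb' (by gcongr)] at e1
    omega
  · exact heq
  · have e1 := h (b' * A)
    rw [h1 b' hb', h0 b _ hb (by gcongr)] at e1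
    omega

theorem aux_main (F G : ℝ → ℝ → ℕ) (A B : ℝ) (D E : ℕ) (hA : 0 < A) (hB : 0 < B)
    (hD : 0 < D) (hE : 0 < E) (hDE : D ≠ E)
    (hF0 : ∀ b x, 0 < b → x < b * A → F b x = 0) (hF1 : ∀ b, 0 < b → F b (b * A) = D)
    (hG0 : ∀ b x, 0 < b → x < b * B → G b x = 0) (hG1 : ∀ b, 0 < b → G b (b * B) = E)
    (a a' b b' : ℝ) (ha : 0 < a) (ha' : 0 < a') (hb : 0 < b) (hb' : 0 < b')
    (h : ∀ x, F b x + G a x = F b' x + G a' x) : a = a' ∧ b = b' := by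
  have kb : b = b' → a = a' ∧ b = b' := by
    rintro rfl
    exact ⟨aux_inj G B E hB hE hG0 hG1 a a' ha ha' (fun x => by have := h x; omega), rfl⟩
  have ka : a = a' → a = a' ∧ b = b' := by
    rintro rfl
    exact ⟨rfl, aux_inj F A D hA hD hF0 hF1 b b' hb hb' (fun x => by have := h x; omega)⟩
  have hm : min (b * A) (a * B) = min (b' * A) (a' * B) := by
    apply le_antisymm
    · by_contra hc
      rw [not_le, lt_min_iff] at hc
      have e := h (min (b' * A) (a' * B))
      rw [hF0 b _ hb hc.1, hG0 a _ ha hc.2] at e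
      rcases min_choice (b' * A) (a' * B) with q | q <;> rw [q] at e
      · rw [hF1 b' hb'] at e; omega
      · rw [hG1 a' ha'] at e; omega
    · by_contra hc
      rw [not_le, lt_min_iff] at hc
      have e := h (min (b * A) (a * B))
      rw [hF0 b' _ hb' hc.1, hG0 a' _ ha' hc.2] at e
      rcases min_choice (b * A) (a * B) with q | q <;> rw [q] at e
      · rw [hF1 b hb] at e; omega
      · rw [hG1 a ha] at e; omega
  have cb : b * A = b' * A → a = a' ∧ b = b' := fun e => kb (mul_right_cancel₀ hA.ne' e)
  have ca : a * B = a' * B → a = a' ∧ b = b' := fun e => ka (mul_right_cancel₀ hB.ne' e)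
  rcases lt_or_ge (b * A) (a * B) with h1 | h1 <;> rcases lt_or_ge (b' * A) (a' * B) with h2 | h2
  · rw [min_eq_left h1.le, min_eq_left h2.le] at hm
    exact cb hm
  · rw [min_eq_left h1.le, min_eq_right h2] at hm
    rcases h2.eq_or_lt with h3 | h3
    · exact cb (hm.trans h3)
    · have e := h (b * A)
      rw [hF1 b hb, hG0 a _ ha h1, hm, hG1 a' ha', hF0 b' _ hb' h3] at e
      omega
  · rw [min_eq_right h1, min_eq_left h2.le] at hm
    rcases h1.eq_or_lt with h3 | h3
    · exact cb (h3.symm.trans hm)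
    · have e := h (a * B)
      rw [hG1 a ha, hF0 b _ hb h3, hm, hF1 b' hb', hG0 a' _ ha' h2] at e
      omega
  · rw [min_eq_right h1, min_eq_right h2] at hm
    exact ca hm

theorem aux_tsum (P : ℕ → Prop) (B : ℕ → ℕ) (d : ℕ → ℕ) (k₀ : ℕ) (hP : P k₀)
    (hB : ∀ k, P k → k ≠ k₀ → B k₀ < B k) (a : ℝ) (ha : 0 < a) :
    (∀ x, x < a * (B k₀ : ℝ) → (∑' k : ℕ, if P k ∧ a * (B k : ℝ) = x then d k else 0) = 0) ∧
    (∑' k : ℕ, if P k ∧ a * (B k : ℝ) = a * (B k₀ : ℝ) then d k else 0) = d k₀ := by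
  constructor
  · intro x hx
    refine (tsum_congr (fun k => ?_)).trans tsum_zero
    rw [if_neg]
    rintro ⟨hk, rfl⟩
    have h1 : B k < B k₀ := by exact_mod_cast lt_of_mul_lt_mul_left hx ha.le
    by_cases e : k = k₀
    · subst e; omega
    · have := hB k hk e; omega
  · rw [tsum_eq_single k₀]
    · simp [hP]
    · intro k hk
      rw [if_neg]
      rintro ⟨hPk, e⟩
      have h1 : B k = B k₀ := by exact_mod_cast mul_left_cancel₀ ha.ne' e
      have := hB k hPk hk
      omega

theorem stmt_15 (n p : ℕ) (hn : 2 ≤ n) (hp : 1 ≤ p) (hpn : p ≤ n - 1) (hn2p : n ≠ 2 * p)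
    (α α' β β' r : ℝ) (hα : 0 < α) (hα' : 0 < α') (hβ : 0 < β) (hβ' : 0 < β') (hr : 0 < r) :
    sphereSpec n p α β r = sphereSpec n p α' β' r ↔ α = α' ∧ β = β' := by
  constructor
  swap
  · rintro ⟨rfl, rfl⟩; rfl
  intro h
  obtain ⟨s, rfl⟩ : ∃ s, p = s + 1 := ⟨p - 1, by omega⟩
  obtain ⟨m, rfl⟩ : ∃ m, n = s + 1 + m + 1 := ⟨n - (s + 1) - 1, by omega⟩
  have hr2 : 0 < r ^ 2 := by positivity
  have dV : ((s + 1 + m + 1 + 1 - 1).factorial * (s + 1 + m + 1 + 2 * 1 - 1)) /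
          ((s+1).factorial * (1 - 1).factorial * (s + 1 + m + 1 - (s+1) - 1).factorial
            * (s + 1 + m + 1 + 1 - (s+1) - 1) * (1 + (s+1)))
      = (s + m + 3).choose (s + 2) := by
    have e1 : s + 1 + m + 1 + 1 - 1 = s + m + 2 := by omega
    have e2 : s + 1 + m + 1 + 2 * 1 - 1 = s + m + 3 := by omega
    have e3 : s + 1 + m + 1 - (s+1) - 1 = m := by omega
    have e4 : s + 1 + m + 1 + 1 - (s+1) - 1 = m + 1 := by omega
    rw [e1, e2, e3, e4, Nat.choose_eq_factorial_div_factorial (by omega)]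
    have e5 : s + m + 3 - (s + 2) = m + 1 := by omega
    rw [e5]
    congr 1
    · rw [Nat.factorial_succ (s + m + 2)]; ring
    · rw [Nat.factorial_succ m, Nat.factorial_succ (s + 1)]; simp; ring
  have dW : ((s + 1 + m + 1 + 0).factorial * (s + 1 + m + 1 + 2 * 0 + 1)) /
          ((s + 1 - 1).factorial * (0).factorial * (s + 1 + m + 1 - (s + 1)).factorial
            * (s + 1 + m + 1 + 0 - (s + 1) + 1) * (0 + (s + 1)))
      = (s + m + 3).choose (s + 1) := by
    have e1 : s + 1 + m + 1 + 0 = s + m + 2 := by omega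
    have e2 : s + 1 + m + 1 + 2 * 0 + 1 = s + m + 3 := by omega
    have e3 : s + 1 + m + 1 - (s+1) = m + 1 := by omega
    have e4 : s + 1 + m + 1 + 0 - (s+1) + 1 = m + 2 := by omega
    rw [e4, e2, e3, e1, Nat.choose_eq_factorial_div_factorial (by omega)]
    have e5 : s + m + 3 - (s + 1) = m + 2 := by omega
    rw [e5]
    congr 1
    · rw [Nat.factorial_succ (s + m + 2)]; ring
    · rw [Nat.factorial_succ (m + 1), Nat.factorial_succ s]; simp; ring
  have tV := aux_tsum (fun k => 1 ≤ k)
    (fun k => (k + (s + 1)) * (k + (s + 1 + m + 1) - (s + 1) - 1))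
    (fun k => ((s + 1 + m + 1 + k - 1).factorial * (s + 1 + m + 1 + 2 * k - 1)) /
          ((s+1).factorial * (k - 1).factorial * (s + 1 + m + 1 - (s+1) - 1).factorial
            * (s + 1 + m + 1 + k - (s+1) - 1) * (k + (s+1)))) 1 le_rfl (by
      intro k hk hk1
      apply Nat.mul_lt_mul'' <;> omega)
  have tW := aux_tsum (fun _ => True)
    (fun k => (k + (s + 1)) * (k + (s + 1 + m + 1) - (s + 1) + 1))
    (fun k => ((s + 1 + m + 1 + k).factorial * (s + 1 + m + 1 + 2 * k + 1)) /
          ((s + 1 - 1).factorial * k.factorial * (s + 1 + m + 1 - (s + 1)).factorial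
            * (s + 1 + m + 1 + k - (s + 1) + 1) * (k + (s + 1)))) 0 trivial (by
      intro k _ hk1
      apply Nat.mul_lt_mul'' <;> omega)
  simp only [dV] at tV
  simp only [dW, true_and] at tW
  have hne : (s + m + 3).choose (s + 2) ≠ (s + m + 3).choose (s + 1) := by
    intro e
    have h1 := Nat.choose_succ_right_eq (s + m + 3) (s + 1)
    rw [e] at h1
    have h2 := Nat.eq_of_mul_eq_mul_left (Nat.choose_pos (by omega)) h1
    omega
  have key := aux_main _ _ _ _ _ _ (by
      have : 0 < (1 + (s + 1)) * (1 + (s + 1 + m + 1) - (s + 1) - 1) :=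
        Nat.mul_pos (by omega) (by omega)
      exact_mod_cast this) (by
      have : 0 < (0 + (s + 1)) * (0 + (s + 1 + m + 1) - (s + 1) + 1) :=
        Nat.mul_pos (by omega) (by omega)
      exact_mod_cast this) (Nat.choose_pos (by omega)) (Nat.choose_pos (by omega)) hne
    (fun b x hb => (tV b hb).1 x) (fun b hb => (tV b hb).2)
    (fun b x hb => (tW b hb).1 x) (fun b hb => (tW b hb).2)
    (α / r ^ 2) (α' / r ^ 2) (β / r ^ 2) (β' / r ^ 2)
    (by positivity) (by positivity) (by positivity) (by positivity)
    (fun x => by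
      have hx := congrFun h x
      simp only [sphereSpec] at hx
      convert hx)
  exact ⟨(div_left_inj' hr2.ne').1 key.1, (div_left_inj' hr2.ne').1 key.2⟩
end

section
/- Let p ≥ 1, set n = 2p, and let α, α', β, β', r > 0 be reals. Then S(n,p,α,β,r) = S(n,p,α',β',r) (as functions ℝ → ℕ) if and only if {α, β} = {α', β'} as unordered pairs. -/
open scoped Classical

/-- Common multiplicity in middle degree. -/
def midMult (p j : ℕ) : ℕ :=
  ((2 * p + j).factorial * (2 * p + 2 * j + 1)) /
    ((p - 1).factorial * j.factorial * p.factorial * (p + j + 1) * (j + p))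

/-- One of the two halves of the spectrum in middle degree. -/
noncomputable def midHalf (p : ℕ) (r c : ℝ) : ℝ → ℕ := fun x =>
  ∑' j : ℕ, if (c / r ^ 2) * (((j + p) * (j + p + 1) : ℕ) : ℝ) = x then midMult p j else 0

lemma sphereSpec_mid (p : ℕ) (hp : 1 ≤ p) (α β r x : ℝ) :
    sphereSpec (2 * p) p α β r x = midHalf p r β x + midHalf p r α x := by
  unfold sphereSpec midHalf
  congr 1
  · rw [← Function.Injective.tsum_eq (g := Nat.succ) Nat.succ_injective]
    · refine tsum_congr fun j => ?_
      have e1 : (j.succ + p) * (j.succ + 2 * p - p - 1) = (j + p) * (j + p + 1) := by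
        have : j.succ + 2 * p - p - 1 = j + p := by omega
        rw [this, Nat.succ_eq_add_one]; ring
      have e2 : 2 * p + j.succ - 1 = 2 * p + j := by omega
      have e3 : 2 * p + 2 * j.succ - 1 = 2 * p + 2 * j + 1 := by omega
      have e4 : 2 * p - p - 1 = p - 1 := by omega
      have e5 : 2 * p + j.succ - p - 1 = j + p := by omega
      have e6 : j.succ - 1 = j := by omega
      have e7 : p.factorial * j.factorial * (p - 1).factorial * (j + p) * (j.succ + p)
          = (p - 1).factorial * j.factorial * p.factorial * (p + j + 1) * (j + p) := by
        rw [Nat.succ_eq_add_one]; ring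
      rw [e1, e2, e3, e4, e5, e6, e7]
      simp [midMult]
    · intro k hk
      rcases k with _ | k
      · simp at hk
      · exact ⟨k, rfl⟩
  · refine tsum_congr fun j => ?_
    have e1 : j + 2 * p - p + 1 = j + p + 1 := by omega
    have e2 : 2 * p - p = p := by omega
    have e3 : 2 * p + j - p + 1 = p + j + 1 := by omega
    rw [e1, e2, e3]
    rfl

lemma midMult_pos (p : ℕ) (hp : 1 ≤ p) : 0 < midMult p 0 := by
  obtain ⟨q, rfl⟩ : ∃ q, p = q + 1 := ⟨p - 1, by omega⟩
  unfold midMult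
  have h := Nat.le_of_dvd (Nat.factorial_pos _)
    (Nat.factorial_mul_factorial_dvd_factorial_add (q + 1) (q + 1 + 1))
  apply Nat.div_pos
  · have e : q + 1 + (q + 1 + 1) = 2 * (q + 1) + 1 := by ring
    rw [e, Nat.factorial_succ (2 * (q + 1)), Nat.factorial_succ (q + 1)] at h
    have e2 := Nat.factorial_succ q
    simp only [Nat.add_sub_cancel, Nat.factorial_zero, Nat.add_zero, Nat.mul_zero]
    calc _ = (q + 1).factorial * ((q + 1 + 1) * ((q + 1) * q.factorial)) := by ring
      _ ≤ _ := by rw [← e2]; linarith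
  · have := Nat.factorial_pos
    simp only [Nat.add_sub_cancel]
    have h1 := this q
    have h2 := this 0
    have h3 := this (q + 1)
    positivity

/-- The lowest eigenvalue. -/
noncomputable def lowE (p : ℕ) (r c : ℝ) : ℝ := (c / r ^ 2) * ((p * (p + 1) : ℕ) : ℝ)

lemma lowE_le {p : ℕ} (hp : 1 ≤ p) {r : ℝ} (hr : 0 < r) {c c' : ℝ} :
    lowE p r c ≤ lowE p r c' ↔ c ≤ c' := by
  unfold lowE
  have h : (0 : ℝ) < ((p * (p + 1) : ℕ) : ℝ) := by
    have : 0 < p * (p + 1) := by positivity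
    exact_mod_cast this
  rw [mul_le_mul_iff_left₀ h, div_le_div_iff_of_pos_right (by positivity)]

lemma midHalf_low {p : ℕ} (hp : 1 ≤ p) {r : ℝ} (hr : 0 < r) {c : ℝ} (hc : 0 < c) :
    0 < midHalf p r c (lowE p r c) := by
  unfold midHalf
  rw [tsum_eq_single 0]
  · simpa [lowE] using midMult_pos p hp
  · intro j hj
    rw [if_neg]
    unfold lowE
    have h : p * (p + 1) < (j + p) * (j + p + 1) := by
      have : 1 ≤ j := by omega
      nlinarith
    have h' : ((p * (p + 1) : ℕ) : ℝ) < (((j + p) * (j + p + 1) : ℕ) : ℝ) := by exact_mod_cast h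
    have hc' : 0 < c / r ^ 2 := by positivity
    exact (mul_lt_mul_of_pos_left h' hc').ne'

lemma le_of_midHalf {p : ℕ} {r : ℝ} (hr : 0 < r) {c x : ℝ} (hc : 0 < c)
    (h : 0 < midHalf p r c x) : lowE p r c ≤ x := by
  by_contra hx
  have : midHalf p r c x = 0 := by
    unfold midHalf
    refine (tsum_congr (g := fun _ => 0) fun j => ?_).trans tsum_zero
    rw [if_neg]
    rintro rfl
    apply hx
    unfold lowE
    have h : p * (p + 1) ≤ (j + p) * (j + p + 1) := by gcongr <;> omega
    have h' : ((p * (p + 1) : ℕ) : ℝ) ≤ (((j + p) * (j + p + 1) : ℕ) : ℝ) := by exact_mod_cast h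
    exact mul_le_mul_of_nonneg_left h' (by positivity)
  omega

/-- The sum of two halves determines a lower bound for one of the primed parameters. -/
lemma mid_exists_le {p : ℕ} (hp : 1 ≤ p) {r : ℝ} (hr : 0 < r) {a a' b' : ℝ} (ha : 0 < a)
    (ha' : 0 < a') (hb' : 0 < b')
    (h : 0 < midHalf p r b' (lowE p r a) + midHalf p r a' (lowE p r a)) : a' ≤ a ∨ b' ≤ a := by
  rcases Nat.eq_zero_or_pos (midHalf p r b' (lowE p r a)) with h0 | h0
  · left
    exact (lowE_le hp hr).1 (le_of_midHalf hr ha' (by omega))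
  · right
    exact (lowE_le hp hr).1 (le_of_midHalf hr hb' h0)

lemma midHalf_inj {p : ℕ} (hp : 1 ≤ p) {r : ℝ} (hr : 0 < r) {c c' : ℝ} (hc : 0 < c) (hc' : 0 < c')
    (h : ∀ x, midHalf p r c x = midHalf p r c' x) : c = c' := by
  apply le_antisymm
  · exact (lowE_le hp hr).1 (le_of_midHalf hr hc (by rw [h]; exact midHalf_low hp hr hc'))
  · exact (lowE_le hp hr).1 (le_of_midHalf hr hc' (by rw [← h]; exact midHalf_low hp hr hc))

/-- Ordered version of the main statement. -/
lemma mid_ordered {p : ℕ} (hp : 1 ≤ p) {r : ℝ} (hr : 0 < r) {a b a' b' : ℝ} (ha : 0 < a)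
    (hb : 0 < b) (ha' : 0 < a') (hb' : 0 < b') (hab : a ≤ b) (hab' : a' ≤ b')
    (h : ∀ x, midHalf p r b x + midHalf p r a x = midHalf p r b' x + midHalf p r a' x) :
    a = a' ∧ b = b' := by
  have h1 : a' ≤ a := by
    have := mid_exists_le hp hr ha ha' hb'
      (by rw [← h]; have := midHalf_low hp hr ha; omega)
    rcases this with h | h <;> linarith
  have h2 : a ≤ a' := by
    have := mid_exists_le hp hr ha' ha hb
      (by rw [h]; have := midHalf_low hp hr ha'; omega)
    rcases this with h | h <;> linarith
  obtain rfl : a = a' := le_antisymm h2 h1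
  exact ⟨rfl, midHalf_inj hp hr hb hb' fun x => by have := h x; omega⟩

/-- Theorem 4.21 (case `n = 2p`): on a fixed sphere in middle degree, `F_{αβ,p}` and
`F_{α'β',p}` are isospectral iff `{α, β} = {α', β'}` as unordered pairs. -/
theorem stmt_16 (p : ℕ) (hp : 1 ≤ p)
    (α α' β β' r : ℝ) (hα : 0 < α) (hα' : 0 < α') (hβ : 0 < β) (hβ' : 0 < β') (hr : 0 < r) :
    sphereSpec (2 * p) p α β r = sphereSpec (2 * p) p α' β' r ↔
      ((α = α' ∧ β = β') ∨ (α = β' ∧ β = α')) := by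
  constructor
  · intro h
    have h' : ∀ x, midHalf p r β x + midHalf p r α x = midHalf p r β' x + midHalf p r α' x := by
      intro x
      rw [← sphereSpec_mid p hp, ← sphereSpec_mid p hp, h]
    rcases le_total α β with h1 | h1 <;> rcases le_total α' β' with h2 | h2
    · exact Or.inl (mid_ordered hp hr hα hβ hα' hβ' h1 h2 h')
    · exact Or.inr (mid_ordered hp hr hα hβ hβ' hα' h1 h2 fun x => by have := h' x; omega)
    · exact Or.inr (mid_ordered hp hr hβ hα hα' hβ' h1 h2 fun x => by have := h' x; omega).symm
    · exact Or.inl (mid_ordered hp hr hβ hα hβ' hα' h1 h2 fun x => by have := h' x; omega).symm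
  · rintro (⟨rfl, rfl⟩ | ⟨rfl, rfl⟩)
    · rfl
    · funext x
      rw [sphereSpec_mid p hp, sphereSpec_mid p hp, add_comm]
end

section
/- Let n ≥ 2 and let p be a natural number with 1 ≤ p ≤ n−1 and n ≠ 2p, and let α, α', β, β', r, r' > 0 be reals such that S(n,p,α,β,r) = S(n,p,α',β',r') (as functions ℝ → ℕ). Then r = r' if and only if α = α' and β = β'. -/
open scoped Classical

noncomputable def specV (n p : ℕ) (b x : ℝ) : ℕ :=
  ∑' k : ℕ,
      if 1 ≤ k ∧ b * (((k + p) * (k + n - p - 1) : ℕ) : ℝ) = x then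
        ((n + k - 1).factorial * (n + 2 * k - 1)) /
          (p.factorial * (k - 1).factorial * (n - p - 1).factorial * (n + k - p - 1) * (k + p))
      else 0

noncomputable def specW (n p : ℕ) (a x : ℝ) : ℕ :=
  ∑' k : ℕ,
      if a * (((k + p) * (k + n - p + 1) : ℕ) : ℝ) = x then
        ((n + k).factorial * (n + 2 * k + 1)) /
          ((p - 1).factorial * k.factorial * (n - p).factorial * (n + k - p + 1) * (k + p))
      else 0

lemma specV_zero (s t : ℕ) (b x : ℝ) (hb : 0 < b)
    (hx : x < b * (((s + 2) * (t + 1) : ℕ) : ℝ)) : specV (s + 1 + (t + 1)) (s + 1) b x = 0 := by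
  unfold specV
  refine (tsum_congr (fun k => ?_)).trans tsum_zero
  rw [if_neg]
  rintro ⟨h1, h2⟩
  have h3 : (s + 2) * (t + 1) ≤ (k + (s + 1)) * (k + (s + 1 + (t + 1)) - (s + 1) - 1) :=
    Nat.mul_le_mul (by omega) (by omega)
  have h4 := mul_le_mul_of_nonneg_left (Nat.cast_le (α := ℝ).2 h3) hb.le
  linarith

lemma specV_first (s t : ℕ) (b : ℝ) (hb : 0 < b) :
    specV (s + 1 + (t + 1)) (s + 1) b (b * (((s + 2) * (t + 1) : ℕ) : ℝ))
      = (s + t + 3).choose (s + 2) := by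
  unfold specV
  rw [tsum_eq_single 1]
  · rw [if_pos]
    · apply Nat.div_eq_of_eq_mul_left
      · have : 0 < s + 1 + (t + 1) + 1 - (s + 1) - 1 := by omega
        positivity
      · have e1 : s + 1 + (t + 1) + 1 - 1 = s + t + 2 := by omega
        have e2 : s + 1 + (t + 1) + 2 * 1 - 1 = s + t + 3 := by omega
        have e3 : s + 1 + (t + 1) - (s + 1) - 1 = t := by omega
        have e4 : s + 1 + (t + 1) + 1 - (s + 1) - 1 = t + 1 := by omega
        rw [e1, e2, e3, e4]
        have := Nat.choose_mul_factorial_mul_factorial (n := s + t + 3) (k := s + 2) (by omega)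
        rw [show s + t + 3 - (s + 2) = t + 1 by omega, Nat.factorial_succ (s + t + 2),
          Nat.factorial_succ t, Nat.factorial_succ (s + 1)] at this
        simp only [Nat.sub_self, Nat.factorial_zero]
        linarith
    · refine ⟨le_rfl, ?_⟩
      congr 3 <;> omega
  · intro k hk
    rw [if_neg]
    rintro ⟨h1, h2⟩
    have h3 : (s + 2) * (t + 1) < (k + (s + 1)) * (k + (s + 1 + (t + 1)) - (s + 1) - 1) :=
      Nat.mul_lt_mul_of_lt_of_le (by omega) (by omega) (by omega)
    have h4 := mul_lt_mul_of_pos_left (Nat.cast_lt (α := ℝ).2 h3) hb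
    linarith

lemma specW_zero (s t : ℕ) (a x : ℝ) (ha : 0 < a)
    (hx : x < a * (((s + 1) * (t + 2) : ℕ) : ℝ)) : specW (s + 1 + (t + 1)) (s + 1) a x = 0 := by
  unfold specW
  refine (tsum_congr (fun k => ?_)).trans tsum_zero
  rw [if_neg]
  intro h2
  have h3 : (s + 1) * (t + 2) ≤ (k + (s + 1)) * (k + (s + 1 + (t + 1)) - (s + 1) + 1) :=
    Nat.mul_le_mul (by omega) (by omega)
  have h4 := mul_le_mul_of_nonneg_left (Nat.cast_le (α := ℝ).2 h3) ha.le
  linarith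

lemma specW_first (s t : ℕ) (a : ℝ) (ha : 0 < a) :
    specW (s + 1 + (t + 1)) (s + 1) a (a * (((s + 1) * (t + 2) : ℕ) : ℝ))
      = (s + t + 3).choose (s + 1) := by
  unfold specW
  rw [tsum_eq_single 0]
  · rw [if_pos]
    · apply Nat.div_eq_of_eq_mul_left
      · positivity
      · have e1 : s + 1 + (t + 1) + 0 = s + t + 2 := by omega
        have e3 : s + 1 + (t + 1) - (s + 1) = t + 1 := by omega
        have e4 : s + t + 2 - (s + 1) + 1 = t + 2 := by omega
        rw [e1, e3, e4]
        have := Nat.choose_mul_factorial_mul_factorial (n := s + t + 3) (k := s + 1) (by omega)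
        rw [show s + t + 3 - (s + 1) = t + 2 by omega, Nat.factorial_succ (s + t + 2),
          Nat.factorial_succ (t + 1), Nat.factorial_succ s] at this
        simp only [Nat.add_sub_cancel, Nat.factorial_zero]
        linarith
    · congr 3 <;> omega
  · intro k hk
    rw [if_neg]
    intro h2
    have h3 : (s + 1) * (t + 2) < (k + (s + 1)) * (k + (s + 1 + (t + 1)) - (s + 1) + 1) :=
      Nat.mul_lt_mul_of_lt_of_le (by omega) (by omega) (by omega)
    have h4 := mul_lt_mul_of_pos_left (Nat.cast_lt (α := ℝ).2 h3) ha
    linarith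

/-- A one-parameter family is determined by its first eigenvalue. -/
lemma family_inj (W : ℝ → ℝ → ℕ) (A : ℝ) (d : ℕ) (hA : 0 < A) (hd : 0 < d)
    (W0 : ∀ a x, 0 < a → x < a * A → W a x = 0) (W1 : ∀ a, 0 < a → W a (a * A) = d)
    (a a' : ℝ) (ha : 0 < a) (ha' : 0 < a') (h : ∀ x, W a x = W a' x) : a = a' := by
  rcases lt_trichotomy a a' with hlt | heq | hlt
  · have := h (a * A)
    rw [W1 a ha, W0 a' _ ha' (mul_lt_mul_of_pos_right hlt hA)] at this
    omega
  · exact heq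
  · have := h (a' * A)
    rw [W1 a' ha', W0 a _ ha (mul_lt_mul_of_pos_right hlt hA)] at this
    omega

lemma first_le (V W : ℝ → ℝ → ℕ) (A B : ℝ) (d e : ℕ) (hd : 0 < d) (he : 0 < e)
    (W0 : ∀ a x, 0 < a → x < a * A → W a x = 0) (W1 : ∀ a, 0 < a → W a (a * A) = d)
    (V0 : ∀ b x, 0 < b → x < b * B → V b x = 0) (V1 : ∀ b, 0 < b → V b (b * B) = e)
    (a a' b b' : ℝ) (ha : 0 < a) (ha' : 0 < a') (hb : 0 < b) (hb' : 0 < b')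
    (h : ∀ x, V b x + W a x = V b' x + W a' x) :
    min (a' * A) (b' * B) ≤ min (a * A) (b * B) := by
  by_contra! hlt
  have h1 := h (min (a * A) (b * B))
  rw [W0 a' _ ha' (lt_of_lt_of_le hlt (min_le_left _ _)),
    V0 b' _ hb' (lt_of_lt_of_le hlt (min_le_right _ _))] at h1
  rcases min_choice (a * A) (b * B) with hm | hm
  · rw [hm, W1 a ha] at h1; omega
  · rw [hm, V1 b hb] at h1; omega

lemma two_family (V W : ℝ → ℝ → ℕ) (A B : ℝ) (d e : ℕ) (hA : 0 < A) (hB : 0 < B)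
    (hd : 0 < d) (he : 0 < e) (hde : d ≠ e)
    (W0 : ∀ a x, 0 < a → x < a * A → W a x = 0) (W1 : ∀ a, 0 < a → W a (a * A) = d)
    (V0 : ∀ b x, 0 < b → x < b * B → V b x = 0) (V1 : ∀ b, 0 < b → V b (b * B) = e)
    (a a' b b' : ℝ) (ha : 0 < a) (ha' : 0 < a') (hb : 0 < b) (hb' : 0 < b')
    (h : ∀ x, V b x + W a x = V b' x + W a' x) : a = a' ∧ b = b' := by
  have hmin := le_antisymm
    (first_le V W A B d e hd he W0 W1 V0 V1 a' a b' b ha' ha hb' hb (fun x => (h x).symm))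
    (first_le V W A B d e hd he W0 W1 V0 V1 a a' b b' ha ha' hb hb' h)
  have fromA : a = a' → a = a' ∧ b = b' := fun e1 =>
    ⟨e1, family_inj V B e hB he V0 V1 b b' hb hb' (fun x => by
      have := h x; rw [e1] at this; omega)⟩
  have fromB : b = b' → a = a' ∧ b = b' := fun e1 =>
    ⟨family_inj W A d hA hd W0 W1 a a' ha ha' (fun x => by
      have := h x; rw [e1] at this; omega), e1⟩
  -- the multiplicity of the first eigenvalue, by type
  have key : ∀ a b : ℝ, 0 < a → 0 < b →
      (min (a * A) (b * B) = a * A ∧ V b (min (a * A) (b * B)) + W a (min (a * A) (b * B)) = d) ∨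
      (min (a * A) (b * B) = b * B ∧ V b (min (a * A) (b * B)) + W a (min (a * A) (b * B)) = e) ∨
      (min (a * A) (b * B) = a * A ∧
        V b (min (a * A) (b * B)) + W a (min (a * A) (b * B)) = d + e) := by
    intro a b ha hb
    rcases lt_trichotomy (a * A) (b * B) with hl | hl | hl
    · left
      rw [min_eq_left hl.le, V0 b _ hb hl, W1 a ha]
      exact ⟨rfl, by omega⟩
    · right; right
      rw [min_eq_left hl.le, W1 a ha, hl, V1 b hb]
      exact ⟨rfl, by omega⟩
    · right; left
      rw [min_eq_right hl.le, W0 a _ ha hl, V1 b hb]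
      exact ⟨rfl, by omega⟩
  have h1 := key a b ha hb
  have h2 := key a' b' ha' hb'
  have h3 := h (min (a * A) (b * B))
  rw [← hmin] at h2
  rcases h1 with ⟨m1, k1⟩ | ⟨m1, k1⟩ | ⟨m1, k1⟩ <;>
    rcases h2 with ⟨m2, k2⟩ | ⟨m2, k2⟩ | ⟨m2, k2⟩ <;>
    first
    | (exfalso; omega)
    | exact fromA (mul_right_cancel₀ hA.ne' (m1.symm.trans m2))
    | exact fromB (mul_right_cancel₀ hB.ne' (m1.symm.trans m2))

/-- Corollary 4.22 (case `n ≠ 2p`): for isospectral operators `F_{αβ,p}` and `F_{α'β',p}`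
on spheres of radii `r` and `r'`, one has `r = r'` iff `(α, β) = (α', β')`. -/
theorem stmt_17 (n p : ℕ) (hn : 2 ≤ n) (hp : 1 ≤ p) (hpn : p ≤ n - 1) (hn2p : n ≠ 2 * p)
    (α α' β β' r r' : ℝ) (hα : 0 < α) (hα' : 0 < α') (hβ : 0 < β) (hβ' : 0 < β')
    (hr : 0 < r) (hr' : 0 < r')
    (h : sphereSpec n p α β r = sphereSpec n p α' β' r') :
    r = r' ↔ (α = α' ∧ β = β') := by
  obtain ⟨s, rfl⟩ : ∃ s, p = s + 1 := ⟨p - 1, by omega⟩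
  obtain ⟨t, rfl⟩ : ∃ t, n = s + 1 + (t + 1) := ⟨n - s - 2, by omega⟩
  have hd : 0 < (s + t + 3).choose (s + 1) := Nat.choose_pos (by omega)
  have he : 0 < (s + t + 3).choose (s + 2) := Nat.choose_pos (by omega)
  have hde : (s + t + 3).choose (s + 1) ≠ (s + t + 3).choose (s + 2) := by
    intro heq
    have h1 := Nat.choose_succ_right_eq (s + t + 3) (s + 1)
    rw [show s + 1 + 1 = s + 2 from rfl, ← heq] at h1
    have h2 := Nat.eq_of_mul_eq_mul_left hd h1
    omega
  have hA : (0 : ℝ) < (((s + 1) * (t + 2) : ℕ) : ℝ) := by positivity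
  have hB : (0 : ℝ) < (((s + 2) * (t + 1) : ℕ) : ℝ) := by positivity
  obtain ⟨ea, eb⟩ := two_family (specV (s + 1 + (t + 1)) (s + 1)) (specW (s + 1 + (t + 1)) (s + 1))
    _ _ _ _ hA hB hd he hde
    (fun a x ha hx => specW_zero s t a x ha hx) (fun a ha => specW_first s t a ha)
    (fun b x hb hx => specV_zero s t b x hb hx) (fun b hb => specV_first s t b hb)
    (α / r ^ 2) (α' / r' ^ 2) (β / r ^ 2) (β' / r' ^ 2)
    (by positivity) (by positivity) (by positivity) (by positivity)
    (fun x => congrFun h x)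
  have hr2 : r ^ 2 ≠ 0 := by positivity
  have hr2' : r' ^ 2 ≠ 0 := by positivity
  constructor
  · rintro rfl
    exact ⟨(div_left_inj' hr2).1 ea, (div_left_inj' hr2).1 eb⟩
  · rintro ⟨rfl, rfl⟩
    rw [div_eq_div_iff hr2 hr2'] at ea
    have h2 := mul_left_cancel₀ hα.ne' ea
    exact ((pow_left_inj₀ hr'.le hr.le two_ne_zero).1 h2).symm
end

section
/- Let p ≥ 1, set n = 2p, and let α, α', β, β', r, c > 0 be reals. Then S(n,p,α,β,r) = S(n,p,α',β',c·r) (as functions ℝ → ℕ) if and only if {α', β'} = {c²α, c²β} as unordered pairs. -/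
open scoped Classical

/-- One half of the spectrum: the eigenvalue `a (k+p)(k+p+1)` with its multiplicity. -/
noncomputable def halfSpec (p : ℕ) (a x : ℝ) : ℕ :=
  ∑' k : ℕ,
      if a * (((k + p) * (k + p + 1) : ℕ) : ℝ) = x then
        ((2 * p + k).factorial * (2 * p + 2 * k + 1)) /
          ((p - 1).factorial * k.factorial * p.factorial * (p + k + 1) * (k + p))
      else 0

theorem sphereSpec_eq (p : ℕ) (hp : 1 ≤ p) (α β r x : ℝ) :
    sphereSpec (2 * p) p α β r x = halfSpec p (β / r ^ 2) x + halfSpec p (α / r ^ 2) x := by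
  unfold sphereSpec halfSpec
  congr 1
  · rw [← (Nat.succ_injective).tsum_eq]
    · apply tsum_congr
      intro k
      have e1 : k.succ + 2 * p - p - 1 = k + p := by omega
      have e2 : 2 * p + k.succ - 1 = 2 * p + k := by omega
      have e3 : 2 * p + 2 * k.succ - 1 = 2 * p + 2 * k + 1 := by omega
      have e4 : k.succ - 1 = k := by omega
      have e5 : 2 * p - p - 1 = p - 1 := by omega
      have e6 : 2 * p + k.succ - p - 1 = p + k := by omega
      have e7 : k.succ + p = k + p + 1 := by omega
      have e8 : 1 ≤ k.succ := by omega
      rw [e1, e2, e3, e4, e5, e6, e7]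
      have e9 : (k + p + 1) * (k + p) = (k + p) * (k + p + 1) := by ring
      have e10 : p.factorial * k.factorial * (p - 1).factorial * (p + k) * (k + p + 1) =
        (p - 1).factorial * k.factorial * p.factorial * (p + k + 1) * (k + p) := by ring
      rw [e9, e10]
      simp only [e8, true_and]
    · intro k hk
      rcases k with _ | k
      · simp at hk
      · exact ⟨k, rfl⟩
  · apply tsum_congr
    intro k
    have e1 : k + 2 * p - p + 1 = k + p + 1 := by omega
    have e2 : 2 * p - p = p := by omega
    have e3 : 2 * p + k - p + 1 = p + k + 1 := by omega
    rw [e1, e2, e3]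

theorem halfSpec_lt (p : ℕ) (a x : ℝ) (ha : 0 < a)
    (hx : x < a * ((p * (p + 1) : ℕ) : ℝ)) : halfSpec p a x = 0 := by
  unfold halfSpec
  refine (tsum_congr ?_).trans tsum_zero
  intro k
  rw [if_neg]
  intro h
  have h1 : p * (p + 1) ≤ (k + p) * (k + p + 1) := by gcongr <;> omega
  have h2 : ((p * (p + 1) : ℕ) : ℝ) ≤ (((k + p) * (k + p + 1) : ℕ) : ℝ) := by exact_mod_cast h1
  have := mul_le_mul_of_nonneg_left h2 ha.le
  linarith

theorem halfSpec_pos (p : ℕ) (hp : 1 ≤ p) (a : ℝ) (ha : 0 < a) :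
    0 < halfSpec p a (a * ((p * (p + 1) : ℕ) : ℝ)) := by
  unfold halfSpec
  rw [tsum_eq_single 0]
  · rw [if_pos (by simp)]
    apply Nat.div_pos
    · obtain ⟨q, rfl⟩ : ∃ q, p = q + 1 := ⟨p - 1, by omega⟩
      have h := Nat.le_of_dvd (Nat.factorial_pos _)
        (Nat.factorial_mul_factorial_dvd_factorial_add (q + 1) (q + 1 + 1))
      have e : q + 1 + (q + 1 + 1) = 2 * (q + 1) + 1 := by ring
      rw [e, Nat.factorial_succ (2 * (q + 1)), Nat.factorial_succ (q + 1)] at h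
      calc _ = (q+1).factorial * ((q + 1 + 1) * (q+1).factorial) := by
            rw [Nat.factorial_succ q]; simp; ring
        _ ≤ _ := h
        _ = _ := by simp; ring
    · have := Nat.factorial_pos
      have h1 := this (p - 1)
      have h2 := this p
      have h3 := this 0
      positivity
  · intro k hk
    rw [if_neg]
    intro h
    have h1 := mul_left_cancel₀ ha.ne' h
    have h2 : (k + p) * (k + p + 1) = p * (p + 1) := by exact_mod_cast h1
    have : 0 < k := by omega
    nlinarith

theorem halfSpec_min (p : ℕ) (hp : 1 ≤ p) (a b a' b' : ℝ) (ha : 0 < a)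
    (ha' : 0 < a') (hb' : 0 < b')
    (h : ∀ x, halfSpec p a x + halfSpec p b x = halfSpec p a' x + halfSpec p b' x) :
    a' ≤ a ∨ b' ≤ a := by
  by_contra! hc
  have hq : (0 : ℝ) < ((p * (p + 1) : ℕ) : ℝ) := by
    have : 0 < p * (p + 1) := by positivity
    exact_mod_cast this
  have h0 := h (a * ((p * (p + 1) : ℕ) : ℝ))
  rw [halfSpec_lt p a' _ ha' (by nlinarith), halfSpec_lt p b' _ hb' (by nlinarith)] at h0
  have := halfSpec_pos p hp a ha
  omega

theorem halfSpec_inj (p : ℕ) (hp : 1 ≤ p) (a b : ℝ) (ha : 0 < a) (hb : 0 < b)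
    (h : ∀ x, halfSpec p a x = halfSpec p b x) : a = b := by
  have h1 := halfSpec_min p hp a a b b ha hb hb (fun x => by rw [h x])
  have h2 := halfSpec_min p hp b b a a hb ha ha (fun x => by rw [h x])
  simp only [or_self] at h1 h2
  exact le_antisymm h2 h1

theorem halfSpec_pair (p : ℕ) (hp : 1 ≤ p) (a b a' b' : ℝ) (ha : 0 < a) (hb : 0 < b)
    (ha' : 0 < a') (hb' : 0 < b')
    (h : ∀ x, halfSpec p a x + halfSpec p b x = halfSpec p a' x + halfSpec p b' x) :
    (a' = a ∧ b' = b) ∨ (a' = b ∧ b' = a) := by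
  have h1 := halfSpec_min p hp a b a' b' ha ha' hb' h
  have h2 := halfSpec_min p hp b a a' b' hb ha' hb' (fun x => by rw [← h x, add_comm])
  have h3 := halfSpec_min p hp a' b' a b ha' ha hb (fun x => (h x).symm)
  have h4 := halfSpec_min p hp b' a' a b hb' ha hb (fun x => by rw [h x, add_comm])
  have key : a' = a ∨ a' = b ∨ b' = a ∨ b' = b := by
    by_contra! hne
    obtain ⟨n1, n2, n3, n4⟩ := hne
    rcases h1 with h1 | h1 <;> rcases h2 with h2 | h2 <;> rcases h3 with h3 | h3 <;>
      rcases h4 with h4 | h4 <;>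
      first
      | exact n1 (by linarith)
      | exact n2 (by linarith)
      | exact n3 (by linarith)
      | exact n4 (by linarith)
  rcases key with e | e | e | e
  · subst e
    exact Or.inl ⟨rfl, (halfSpec_inj p hp b b' hb hb' (fun x => by have := h x; omega)).symm⟩
  · subst e
    exact Or.inr ⟨rfl, (halfSpec_inj p hp a b' ha hb' (fun x => by have := h x; omega)).symm⟩
  · subst e
    exact Or.inr ⟨(halfSpec_inj p hp b a' hb ha' (fun x => by have := h x; omega)).symm, rfl⟩
  · subst e
    exact Or.inl ⟨(halfSpec_inj p hp a a' ha ha' (fun x => by have := h x; omega)).symm, rfl⟩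

/-- Satz 4.23 (case `n = 2p`): `F_{αβ,p}` on the sphere of radius `r` and `F_{α'β',p}` on
the sphere of radius `cr` are isospectral iff `{α', β'} = {c²α, c²β}` as unordered pairs. -/
theorem stmt_19 (p : ℕ) (hp : 1 ≤ p)
    (α α' β β' r c : ℝ) (hα : 0 < α) (hα' : 0 < α') (hβ : 0 < β) (hβ' : 0 < β')
    (hr : 0 < r) (hc : 0 < c) :
    sphereSpec (2 * p) p α β r = sphereSpec (2 * p) p α' β' (c * r) ↔
      ((α' = c ^ 2 * α ∧ β' = c ^ 2 * β) ∨ (α' = c ^ 2 * β ∧ β' = c ^ 2 * α)) := by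
  have hs : ∀ u v : ℝ, u / (c * r) ^ 2 = v / r ^ 2 ↔ u = c ^ 2 * v := by
    intro u v
    rw [div_eq_div_iff (by positivity) (by positivity), mul_pow]
    have hr2 : r ^ 2 ≠ 0 := by positivity
    constructor
    · intro h
      apply mul_right_cancel₀ hr2
      rw [h]; ring
    · intro h
      rw [h]; ring
  constructor
  · intro h
    have := halfSpec_pair p hp (α / r ^ 2) (β / r ^ 2) (α' / (c * r) ^ 2) (β' / (c * r) ^ 2)
      (by positivity) (by positivity) (by positivity) (by positivity) (fun x => by
        have hx := congrFun h x
        rw [sphereSpec_eq p hp, sphereSpec_eq p hp] at hx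
        omega)
    simpa only [hs] using this
  · intro h
    funext x
    rw [sphereSpec_eq p hp, sphereSpec_eq p hp]
    rcases h with ⟨h1, h2⟩ | ⟨h1, h2⟩
    · rw [(hs _ _).2 h1, (hs _ _).2 h2]
    · rw [(hs _ _).2 h1, (hs _ _).2 h2, add_comm]
end
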